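/- arXiv:1704.03702 — 2 statements merged into one kernel-verified Lean document; each statement's English description precedes it below -/
import Mathlib

section
/- Let $K$ be a field, $P=K[X_0,\dots,X_n]$ with the standard grading, and let $\mathbb X\subseteq\mathbb P^n_K$ be a $0$-dimensional (in particular non-empty) subscheme with saturated homogeneous vanishing ideal $I_{\mathbb X}$, homogeneous coordinate ring $R=P/I_{\mathbb X}$ and set of closed points $\mathrm{Supp}(\mathbb X)=\{p_1,\dots,p_s\}$. Assume that no $p_j$ lies on the hyperplane $\mathcal Z(X_0)$, and that $\mathbb X$ is locally Gorenstein, i.e. every local ring $\mathcal O_{\mathbb X,p_j}$ is Gorenstein. Let $x_0\in R$ be the class of $X_0$, $L_0=K[x_0,x_0^{-1}]$, and $\nu_j=\dim_K\mathcal O_{\mathbb X,p_j}$. Identify the homogeneous ring of quotients $Q^h(R)$ with $\prod_{j=1}^s\mathcal O_{\mathbb X,p_j}[T_j,T_j^{-1}]$, so that $R\subseteq Q^h(R)$ via $f\mapsto(f_{p_1}T_1^i,\dots,f_{p_s}T_s^i)$ for $f\in R_i$, where $f_{p_j}$ is the germ of $f$ at $p_j$ (trivialized by $x_0^i$, so $x_0=(T_1,\dots,T_s)$).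 Let $\widetilde R=\prod_{j=1}^s\mathcal O_{\mathbb X,p_j}[T_j]\subseteq Q^h(R)$, and let $\mathfrak F_{\widetilde R/R}=\{f\in\widetilde R\mid f\widetilde R\subseteq R\}$ be the conductor. Let $\sigma$ be a homogeneous trace map of degree zero of $Q^h(R)/L_0$, i.e. $\sigma\in\mathrm{Hom}_{L_0}(Q^h(R),L_0)$ is homogeneous of degree zero and $\Sigma\colon Q^h(R)\to\mathrm{Hom}_{L_0}(Q^h(R),L_0)$, $g\mapsto g\cdot\sigma$, is bijective. Let $\mathfrak C^\sigma_{\mathbb X}\subseteq Q^h(R)$ be the Dedekind complementary module, i.e. the image of $\mathrm{Hom}_{K[x_0]}(R,K[x_0])$ under $\varphi\mapsto\Sigma^{-1}(\varphi\otimes\mathrm{id}_{L_0})$. For a subscheme $\mathbb Y\subseteq\mathbb X$ (possibly empty) let $I_{\mathbb Y}\subseteq P$ be its homogeneous ideal, $\mathrm{HF}_{\mathbb Y}(i)=\dim_K(P/I_{\mathbb Y})_i$, $I_{\mathbb Y/\mathbb X}=I_{\mathbb Y}/I_{\mathbb X}$, and $\alpha_{\mathbb Y/\mathbb X}=\min\{i\mid(I_{\mathbb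 Y/\mathbb X})_i\ne0\}$. Let $r_{\mathbb X}$ be the least $i\ge 0$ with $\mathrm{HF}_{\mathbb X}(k)=\deg(\mathbb X)=\sum_j\nu_j$ for all $k\ge i$. For each $j$ let $I_j$ be the homogeneous vanishing ideal of $\mathbb X$ at $p_j$ (generated by the homogeneous polynomials whose germ in $\mathcal O_{\mathbb X,p_j}$ is zero), and let $\mathbb Y_j$ be the subscheme of $\mathbb X$ with $I_{\mathbb Y_j}=\bigcap_{k\ne j}I_k$ (so $I_{\mathbb Y_1}=P$ if $s=1$). A maximal $p_j$-subscheme of $\mathbb X$ is a subscheme $\mathbb Y\subseteq\mathbb X$ with $\mathcal O_{\mathbb Y,p_k}=\mathcal O_{\mathbb X,p_k}$ for $k\ne j$ and $\deg(\mathbb Y)=\deg(\mathbb X)-\dim_K\kappa(p_j)$, where $\kappa(p_j)$ is the residue field at $p_j$; the kernel of $\mathcal O_{\mathbb X,p_j}\to\mathcal O_{\mathbb Y,p_j}$ is then generated by a non-zero socle element $s_j$. For $a\in\mathcal O_{\mathbb X,p_j}$ let $\mu(a)=\min\{i\in\mathbb N\mid(0,\dots,0,aT_j^i,0,\dots,0)\in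 R\}$, and let $\mu_{\mathbb Y/\mathbb X}=\max_k\mu(e_ks_j)$, where $e_1,e_2,\dots\in\mathcal O_{\mathbb X,p_j}$ are elements whose residue classes form a $K$-basis of $\kappa(p_j)$ (this number does not depend on the choices). Let $\deg_{\mathbb X}(p_j)$ be the minimum of $\mu_{\mathbb Y/\mathbb X}$ over all maximal $p_j$-subschemes $\mathbb Y$. The scheme $\mathbb X$ is a Cayley–Bacharach scheme if $\deg_{\mathbb X}(p_j)\ge r_{\mathbb X}$ for all $j$. Then Dedekind's formula $$\mathfrak F_{\widetilde R/R}\cdot\mathfrak C^\sigma_{\mathbb X}=\widetilde R$$ holds if at least one of the following conditions is satisfied: (a) $\mathbb X$ is a Cayley–Bacharach scheme; (b) for every $j\in\{1,\dots,s\}$, $\mathrm{HF}_{\mathbb Y_j}(i)=\mathrm{HF}_{\mathbb X}(i)$ for all $i<\alpha_{\mathbb Y_j/\mathbb X}$ and $\mathrm{HF}_{\mathbb Y_j}(i)=\mathrm{HF}_{\mathbb X}(i)-\nu_j$ (an equation of integers) for all $i\ge\alpha_{\mathbb Y_j/\mathbb X}$. -/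
noncomputable section

universe u

open Polynomial

attribute [local instance] MvPolynomial.gradedAlgebra

/-- A 0-dimensional subscheme `𝕏` of `ℙⁿ_K`, none of whose points lies on the hyperplane
`Z(X₀)`.  Closed subschemes of `ℙⁿ_K` are the same as saturated homogeneous ideals of
`P = K[X₀, …, Xₙ]`; `𝕏` is 0-dimensional (in particular nonempty) iff `P/I_𝕏` has
Krull dimension one. -/
structure ZeroDimSubscheme (K : Type u) [Field K] (n : ℕ) : Type u where
  /-- the homogeneous vanishing ideal `I_𝕏` -/
  I : Ideal (MvPolynomial (Fin (n + 1)) K)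
  homogeneous : I.IsHomogeneous (MvPolynomial.homogeneousSubmodule (Fin (n + 1)) K)
  saturated : ∀ (F : MvPolynomial (Fin (n + 1)) K) (k : ℕ),
    (∀ G ∈ Ideal.span (Set.range (MvPolynomial.X (R := K) (σ := Fin (n + 1)))) ^ k, G * F ∈ I) →
      F ∈ I
  dim_eq : ringKrullDim (MvPolynomial (Fin (n + 1)) K ⧸ I) = 1
  X0_notMem : ∀ p : ProjectiveSpectrum (MvPolynomial.homogeneousSubmodule (Fin (n + 1)) K),
    I ≤ p.asHomogeneousIdeal.toIdeal →
      (MvPolynomial.X 0 : MvPolynomial (Fin (n + 1)) K) ∉ p.asHomogeneousIdeal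

namespace ZeroDimSubscheme

variable {K : Type u} [Field K] {n : ℕ} (S : ZeroDimSubscheme K n)

/-! ### The homogeneous coordinate ring -/

/-- The homogeneous coordinate ring `R = P/I_𝕏`. -/
def R : Type u := MvPolynomial (Fin (n + 1)) K ⧸ S.I

instance : CommRing S.R := inferInstanceAs (CommRing (MvPolynomial (Fin (n + 1)) K ⧸ S.I))

instance : Algebra K S.R := inferInstanceAs (Algebra K (MvPolynomial (Fin (n + 1)) K ⧸ S.I))

/-- The residue class map `P → R`. -/
def mkR : MvPolynomial (Fin (n + 1)) K →ₐ[K] S.R := Ideal.Quotient.mkₐ K S.I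

/-- The element `x₀` of `R`. -/
def x0 : S.R := S.mkR (MvPolynomial.X 0)

/-- `R` as an algebra over `K[x₀]`. -/
instance : Algebra K[X] S.R := (Polynomial.aeval S.x0).toRingHom.toAlgebra

/-- The homogeneous component `R_i`. -/
def Rdeg (i : ℕ) : Submodule K S.R :=
  (MvPolynomial.homogeneousSubmodule (Fin (n + 1)) K i).map S.mkR.toLinearMap

/-! ### Points and local rings -/

/-- Since `𝕏` does not meet `Z(X₀)`, it is contained in the affine chart `X₀ ≠ 0`;
there it is `Spec A` with `A = P/(I_𝕏 + (X₀ - 1))` (dehomogenization). -/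
def A : Type u :=
  MvPolynomial (Fin (n + 1)) K ⧸ (S.I ⊔ Ideal.span {(MvPolynomial.X 0 - 1)})

instance : CommRing S.A := inferInstanceAs (CommRing
  (MvPolynomial (Fin (n + 1)) K ⧸ (S.I ⊔ Ideal.span {(MvPolynomial.X 0 - 1)})))

instance : Algebra K S.A := inferInstanceAs (Algebra K
  (MvPolynomial (Fin (n + 1)) K ⧸ (S.I ⊔ Ideal.span {(MvPolynomial.X 0 - 1)})))

/-- The residue class map `P → A`. -/
def mkA : MvPolynomial (Fin (n + 1)) K →ₐ[K] S.A := Ideal.Quotient.mkₐ K _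

/-- The support of `𝕏`, i.e. its set of closed points. -/
abbrev Supp : Type u := MaximalSpectrum S.A

/-- The local ring `𝒪_{𝕏,p}`. -/
abbrev O (p : S.Supp) : Type u := Localization.AtPrime p.asIdeal

/-- `𝕏` is locally Gorenstein: every `𝒪_{𝕏,p}` is a Gorenstein ring.  For the Artinian local
ring `𝒪_{𝕏,p}`, finite injective dimension over itself means self-injectivity. -/
def LocallyGorenstein : Prop := ∀ p : S.Supp, Module.Injective (S.O p) (S.O p)

/-- `ν_p = dim_K 𝒪_{𝕏,p}`. -/
def nu (p : S.Supp) : ℕ := Module.finrank K (S.O p)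

/-- `deg(𝕏) = ∑_p dim_K 𝒪_{𝕏,p}`. -/
def deg : ℕ := ∑ᶠ p : S.Supp, Module.finrank K (S.O p)

/-! ### The rings `R ⊆ R̃ ⊆ Q^h(R)` -/

/-- The map `P → A[T]` sending a homogeneous `F` of degree `i` to `F(1, x₁, …, xₙ) Tⁱ`. -/
def homA : MvPolynomial (Fin (n + 1)) K →ₐ[K] S.A[X] :=
  MvPolynomial.aeval fun i =>
    Polynomial.C (S.mkA (MvPolynomial.X i)) * Polynomial.X

theorem homA_of_homogeneous {F : MvPolynomial (Fin (n + 1)) K} {d : ℕ}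
    (hF : F.IsHomogeneous d) :
    S.homA F = Polynomial.C (S.mkA F) * Polynomial.X ^ d := by
  classical
  conv_lhs => rw [F.as_sum]
  conv_rhs => rw [F.as_sum]
  rw [map_sum, map_sum, map_sum, Finset.sum_mul]
  refine Finset.sum_congr rfl fun m hm => ?_
  have hd : m.sum (fun _ e => e) = d := by
    have := hF (MvPolynomial.mem_support_iff.mp hm)
    rw [Finsupp.weight_apply] at this
    simpa using this
  rw [homA, MvPolynomial.aeval_monomial, MvPolynomial.monomial_eq]
  simp only [mul_pow, map_mul, Finsupp.prod, Finset.prod_mul_distrib, map_prod, map_pow]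
  rw [Finset.prod_pow_eq_pow_sum, ← hd, Finsupp.sum, mul_assoc]
  rfl

theorem homA_eq_zero {F : MvPolynomial (Fin (n + 1)) K} (hF : F ∈ S.I) : S.homA F = 0 := by
  classical
  rw [← DirectSum.sum_support_decompose
    (MvPolynomial.homogeneousSubmodule (Fin (n + 1)) K) F, map_sum]
  refine Finset.sum_eq_zero fun d _ => ?_
  have h1 := S.homogeneous d hF
  have h2 : ((DirectSum.decompose (MvPolynomial.homogeneousSubmodule (Fin (n + 1)) K) F d :
      MvPolynomial (Fin (n + 1)) K)).IsHomogeneous d :=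
    (MvPolynomial.mem_homogeneousSubmodule _ _).mp (SetLike.coe_mem _)
  have h3 : S.mkA (DirectSum.decompose (MvPolynomial.homogeneousSubmodule (Fin (n + 1)) K) F d :
      MvPolynomial (Fin (n + 1)) K) = 0 :=
    Ideal.Quotient.eq_zero_iff_mem.mpr (Ideal.mem_sup_left h1)
  rw [S.homA_of_homogeneous h2, h3, map_zero, zero_mul]

/-- `R̃ = ∏_p 𝒪_{𝕏,p}[T_p]`. -/
def Rt : Type u := ∀ p : S.Supp, (S.O p)[X]

instance : CommRing S.Rt := inferInstanceAs (CommRing (∀ p : S.Supp, (S.O p)[X]))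

instance : Algebra K S.Rt := inferInstanceAs (Algebra K (∀ p : S.Supp, (S.O p)[X]))

/-- The germ map at `p`: `F ↦ F_p T_pⁱ` for homogeneous `F` of degree `i`, where `F_p` is the
germ of `F` at `p`. -/
def germ (p : S.Supp) : MvPolynomial (Fin (n + 1)) K →ₐ[K] (S.O p)[X] :=
  (Polynomial.mapAlgHom (IsScalarTower.toAlgHom K S.A (S.O p))).comp S.homA

/-- The map `R → R̃`, `f ↦ (f_{p_1} T_1ⁱ, …, f_{p_s} T_sⁱ)` for `f ∈ R_i`. -/
def toRt : S.R →ₐ[K] S.Rt :=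
  Ideal.Quotient.liftₐ S.I (AlgHom.pi S.germ) (by
    intro F hF
    funext p
    change S.germ p F = 0
    simp [germ, S.homA_eq_zero hF])

/-- The homogeneous ring of quotients `Q^h(R) = ∏_p 𝒪_{𝕏,p}[T_p, T_p⁻¹]`. -/
def Q : Type u := ∀ p : S.Supp, LaurentPolynomial (S.O p)

instance : CommRing S.Q := inferInstanceAs (CommRing (∀ p : S.Supp, LaurentPolynomial (S.O p)))

instance : Algebra K S.Q := inferInstanceAs (Algebra K (∀ p : S.Supp, LaurentPolynomial (S.O p)))

/-- The inclusion `R̃ ⊆ Q^h(R)`. -/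
def incl : S.Rt →+* S.Q :=
  RingHom.pi fun p => (Polynomial.toLaurent (R := S.O p)).comp (Pi.evalRingHom _ p)

/-- The injection `ĩ : R → Q^h(R)`. -/
def iota : S.R →+* S.Q := S.incl.comp S.toRt.toRingHom

instance : Algebra S.R S.Rt := S.toRt.toRingHom.toAlgebra

instance : Algebra S.R S.Q := S.iota.toAlgebra

/-- `Q^h(R)` as an algebra over `L₀ = K[x₀, x₀⁻¹]`, with `x₀ = (T_1, …, T_s)`. -/
instance : Algebra (LaurentPolynomial K) S.Q :=
  (RingHom.pi fun p => AddMonoidAlgebra.mapRingHom ℤ (algebraMap K (S.O p)) :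
    LaurentPolynomial K →+* S.Q).toAlgebra

/-- `R̃` as an `R`-submodule of `Q^h(R)`. -/
def Rtilde : Submodule S.R S.Q :=
  LinearMap.range
    ({ S.incl.toAddMonoidHom with
        map_smul' := fun r x => by
          change S.incl (S.toRt r * x) = S.incl (S.toRt r) * S.incl x
          exact map_mul _ _ _ } : S.Rt →ₗ[S.R] S.Q)

/-- The conductor `𝔉_{R̃/R} = {f ∈ R̃ | f · R̃ ⊆ R}`; here `1` is the image of `R` in `Q^h(R)`. -/
def conductor : Submodule S.R S.Q where
  carrier := {f | f ∈ S.Rtilde ∧ ∀ g ∈ S.Rtilde, f * g ∈ (1 : Submodule S.R S.Q)}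
  zero_mem' := ⟨zero_mem _, fun g _ => by rw [zero_mul]; exact zero_mem _⟩
  add_mem' := fun ha hb =>
    ⟨add_mem ha.1 hb.1, fun g hg => by rw [add_mul]; exact add_mem (ha.2 g hg) (hb.2 g hg)⟩
  smul_mem' := fun r _ ha =>
    ⟨Submodule.smul_mem _ r ha.1, fun g hg => by
      rw [smul_mul_assoc]; exact Submodule.smul_mem _ r (ha.2 g hg)⟩

/-! ### Trace maps and the Dedekind complementary module -/

/-- `q ∈ Q^h(R)_i`. -/
def IsHomogeneousOfDegree (q : S.Q) (i : ℤ) : Prop :=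
  ∀ p : S.Supp, ∃ a : S.O p, q p = LaurentPolynomial.C a * LaurentPolynomial.T i

/-- `Σ : Q^h(R) → Hom_{L₀}(Q^h(R), L₀)`, `g ↦ g · σ`, where `(g · σ)(q) = σ(g q)`. -/
def Sig (σ : S.Q →ₗ[LaurentPolynomial K] LaurentPolynomial K) (g : S.Q) :
    S.Q →ₗ[LaurentPolynomial K] LaurentPolynomial K :=
  σ ∘ₗ LinearMap.mulLeft (LaurentPolynomial K) g

/-- `σ` is a homogeneous trace map of degree zero of `Q^h(R)/L₀`: it is homogeneous of degree
zero and `{σ}` is a basis of the `Q^h(R)`-module `Hom_{L₀}(Q^h(R), L₀)`. -/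
structure IsTraceMap (σ : S.Q →ₗ[LaurentPolynomial K] LaurentPolynomial K) : Prop where
  degree_zero : ∀ (q : S.Q) (i : ℤ), S.IsHomogeneousOfDegree q i →
    ∃ c : K, σ q = LaurentPolynomial.C c * LaurentPolynomial.T i
  basis : Function.Bijective (S.Sig σ)

/-- `ψ = φ ⊗ id_{L₀}`: since `Q^h(R) = R ⊗_{K[x₀]} L₀`, this is the `L₀`-linear map
`Q^h(R) → L₀` which restricts to `φ` on `R`. -/
def IsScalarExtension (φ : S.R →ₗ[K[X]] K[X])
    (ψ : S.Q →ₗ[LaurentPolynomial K] LaurentPolynomial K) : Prop :=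
  ∀ r : S.R, ψ (S.iota r) = Polynomial.toLaurent (φ r)

theorem iota_smul (r : S.R) (x : S.R) : S.iota r * S.iota x = S.iota (r * x) :=
  (map_mul _ _ _).symm

/-- The Dedekind complementary module `𝔠^σ_𝕏 ⊆ Q^h(R)`: the image of
`ω_R(1) = Hom_{K[x₀]}(R, K[x₀])` under `φ ↦ Σ⁻¹(φ ⊗ id_{L₀})`. -/
def complementary (σ : S.Q →ₗ[LaurentPolynomial K] LaurentPolynomial K) :
    Submodule S.R S.Q where
  carrier := {g | ∃ φ : S.R →ₗ[K[X]] K[X], S.IsScalarExtension φ (S.Sig σ g)}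
  zero_mem' := ⟨0, fun r => by simp [Sig]⟩
  add_mem' := by
    rintro a b ⟨φ, hφ⟩ ⟨ψ, hψ⟩
    refine ⟨φ + ψ, fun r => ?_⟩
    have h1 := hφ r
    have h2 := hψ r
    simp only [Sig, LinearMap.comp_apply, LinearMap.mulLeft_apply] at h1 h2 ⊢
    rw [add_mul, map_add, h1, h2, LinearMap.add_apply, map_add]
  smul_mem' := by
    rintro c a ⟨φ, hφ⟩
    refine ⟨φ ∘ₗ LinearMap.mulLeft K[X] c, fun r => ?_⟩
    have h1 := hφ (c * r)
    simp only [Sig, LinearMap.comp_apply, LinearMap.mulLeft_apply] at h1 ⊢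
    rw [← h1, Algebra.smul_def, ← S.iota_smul]
    congr 1
    change S.iota c * a * S.iota r = a * (S.iota c * S.iota r)
    ring

/-! ### Hilbert functions -/

/-- The Hilbert function `i ↦ dim_K (P/J)_i` of the scheme with homogeneous ideal `J ⊆ P`. -/
def hilb (J : Ideal (MvPolynomial (Fin (n + 1)) K)) (i : ℕ) : ℕ :=
  Module.finrank K
    ((MvPolynomial.homogeneousSubmodule (Fin (n + 1)) K i).map (Ideal.Quotient.mkₐ K J).toLinearMap)

/-- `HF_𝕏`. -/
def HF (i : ℕ) : ℕ := hilb S.I i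

/-- `r_𝕏`, the least `i` with `HF_𝕏(j) = deg(𝕏)` for all `j ≥ i`. -/
def rX : ℕ := sInf {i : ℕ | ∀ j, i ≤ j → S.HF j = S.deg}

/-- The homogeneous vanishing ideal `I_p ⊆ P` of `𝕏` at `p`. -/
def vanishingIdealAt (p : S.Supp) : Ideal (MvPolynomial (Fin (n + 1)) K) :=
  RingHom.ker (S.germ p)

/-- The ideal `I_{𝕐_p} = ⋂_{q ≠ p} I_q` of the subscheme `𝕐_p`. -/
def IY (p : S.Supp) : Ideal (MvPolynomial (Fin (n + 1)) K) :=
  ⨅ (q : S.Supp) (_ : q ≠ p), S.vanishingIdealAt q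

/-- `HF_{𝕐_p}`. -/
def HFY (p : S.Supp) (i : ℕ) : ℕ := hilb (S.IY p) i

/-- `α_{𝕐_p/𝕏} = min {i | (I_{𝕐_p/𝕏})_i ≠ 0}`, where `I_{𝕐_p/𝕏}` is the image of `I_{𝕐_p}`
in `R`. -/
def alphaY (p : S.Supp) : ℕ :=
  sInf {i : ℕ | ∃ f ∈ S.Rdeg i, f ∈ (S.IY p).map S.mkR ∧ f ≠ 0}

/-! ### Separators and Cayley–Bacharach schemes -/

/-- `ϰ_p = dim_K κ(p)`, where `κ(p)` is the residue field of `𝕏` at `p`. -/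
def kappa (p : S.Supp) : ℕ := Module.finrank K (IsLocalRing.ResidueField (S.O p))

/-- The subschemes `𝕐 ⊆ 𝕏 = Spec A` are given by the ideals `J ⊆ A`, and
`𝒪_{𝕐,q} = 𝒪_{𝕏,q}/J𝒪_{𝕏,q}`.  The subscheme given by `J` is a maximal `p`-subscheme if
`𝒪_{𝕐,q} = 𝒪_{𝕏,q}` for `q ≠ p` and `deg(𝕐) = deg(𝕏) - dim_K κ(p)`. -/
structure IsMaximalSubscheme (p : S.Supp) (J : Ideal S.A) : Prop where
  eq_away : ∀ q : S.Supp, q ≠ p → J.map (algebraMap S.A (S.O q)) = ⊥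
  degree : (∑ᶠ q : S.Supp, Module.finrank K (S.O q ⧸ J.map (algebraMap S.A (S.O q)))) +
    S.kappa p = S.deg

/-- `s` is a socle element of `𝒪_{𝕏,p}` corresponding to the maximal `p`-subscheme given by `J`:
`s ∈ Ann(𝔪_{𝕏,p}) \ {0}` and `J` generates the ideal `⟨(0, …, 0, s, 0, …, 0)⟩` of
`∏_q 𝒪_{𝕏,q}`. -/
structure IsSocleElementOf (p : S.Supp) (J : Ideal S.A) (s : S.O p) : Prop where
  ne_zero : s ≠ 0
  socle : ∀ b ∈ IsLocalRing.maximalIdeal (S.O p), s * b = 0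
  span_eq : J.map (algebraMap S.A (S.O p)) = Ideal.span {s}

open Classical in
/-- `μ(a) = min {i ∈ ℕ | (0, …, 0, a T_pⁱ, 0, …, 0) ∈ ĩ(R)}` for `a ∈ 𝒪_{𝕏,p}`. -/
def mu (p : S.Supp) (a : S.O p) : ℕ :=
  sInf {i : ℕ | (Pi.single p (LaurentPolynomial.C a * LaurentPolynomial.T (i : ℤ)) : S.Q) ∈
    Set.range S.iota}

/-- The residue classes of `e₁, …, e_ϰ ∈ 𝒪_{𝕏,p}` form a `K`-basis of `κ(p)`. -/
def IsResidueBasis (p : S.Supp) (e : Fin (S.kappa p) → S.O p) : Prop :=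
  LinearIndependent K (fun k => IsLocalRing.residue (S.O p) (e k)) ∧
    Submodule.span K (Set.range fun k => IsLocalRing.residue (S.O p) (e k)) = ⊤

/-- The maximal degree `max_k μ(e_k s)` of a minimal separator with respect to the socle element
`s` and the elements `e₁, …, e_ϰ`. -/
def maxSepDegree (p : S.Supp) (s : S.O p) (e : Fin (S.kappa p) → S.O p) : ℕ :=
  Finset.univ.sup fun k => S.mu p (e k * s)

/-- `m = μ_{𝕐/𝕏}` for the maximal `p`-subscheme `𝕐` given by `J`: `m` is the maximal degree of a
minimal separator of `𝕐` in `𝕏` with respect to some choice of `s` and `e₁, …, e_ϰ`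
(the value does not depend on that choice). -/
def IsMuY (p : S.Supp) (J : Ideal S.A) (m : ℕ) : Prop :=
  ∃ (s : S.O p) (e : Fin (S.kappa p) → S.O p),
    S.IsSocleElementOf p J s ∧ S.IsResidueBasis p e ∧ m = S.maxSepDegree p s e

/-- `deg_𝕏(p) = min {μ_{𝕐/𝕏} | 𝕐 a maximal p-subscheme of 𝕏}`. -/
def degAt (p : S.Supp) : ℕ :=
  sInf {m : ℕ | ∃ J : Ideal S.A, S.IsMaximalSubscheme p J ∧ S.IsMuY p J m}

/-- `𝕏` is a Cayley–Bacharach scheme: `deg_𝕏(p) ≥ r_𝕏` for all points `p` of its support. -/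
def IsCayleyBacharach : Prop := ∀ p : S.Supp, S.rX ≤ S.degAt p

end ZeroDimSubscheme

end

/-!
In degree zero the trace map `σ` is a linear form `τ` on `∏_q 𝒪_{𝕏,q}`, and `(a, b) ↦ τ(ab)` is a
perfect pairing; `g ∈ Q^h(R)` lies in the complementary module iff `σ(gR) ⊆ K[x₀]`. Hence every
coefficient of negative degree of a product from `𝔉 · 𝔠` is orthogonal to everything, which gives
`𝔉 · 𝔠 ⊆ R̃`.

For the other inclusion, fix `p` and suppose that some degree `i` has two properties: `R_i`
contains `𝒪_{𝕏,p} T_pⁱ`, and some socle element `t` of `𝒪_{𝕏,p}` does not occur in `R_{i-1}`. By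
duality there is a tuple of germs `g` which is orthogonal to `R_{i-1}` but not to `t`. Then
`g T⁻ⁱ ∈ 𝔠`, and `g` is a unit at `p`, since a non-unit kills the socle. As `𝒪_{𝕏,p} T_pⁱ ⊆ 𝔉`, the
product `𝔉 · 𝔠` contains `𝒪_{𝕏,p}`. Under the Cayley–Bacharach condition `i = r_𝕏` has the two
properties; under the condition on Hilbert functions `i = α_{𝕐_p/𝕏}` has them for every `t ≠ 0`.
-/

noncomputable section

open Polynomial
open MvPolynomial (homogeneousSubmodule homogeneousComponent idealOfVars)

attribute [local instance] MvPolynomial.gradedAlgebra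

section CommSemiring

variable {ι R B : Type*} [CommSemiring R] [CommSemiring B] [Algebra R B]

theorem aeval_mul_of_isHomogeneous {F : MvPolynomial ι R} {d : ℕ} (hF : F.IsHomogeneous d)
    (c : B) (y : ι → B) :
    MvPolynomial.aeval (fun j => c * y j) F = c ^ d * MvPolynomial.aeval y F := by
  simp only [MvPolynomial.aeval_eq_eval₂Hom, MvPolynomial.coe_eval₂Hom, MvPolynomial.eval₂_eq,
    Finset.mul_sum]
  refine Finset.sum_congr rfl fun m hm => ?_
  rw [hF.degree_eq_sum_deg_support hm]
  simp only [mul_pow, Finset.prod_mul_distrib, Finset.prod_pow_eq_pow_sum]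
  ring

theorem homogeneousComponent_succ_X_mul (i : ι) (F : MvPolynomial ι R) (d : ℕ) :
    homogeneousComponent (d + 1) (MvPolynomial.X i * F) =
      MvPolynomial.X i * homogeneousComponent d F := by
  simpa [← MvPolynomial.decomposition.decompose'_apply] using
    DirectSum.coe_decompose_mul_of_left_mem_of_le (homogeneousSubmodule ι R) (b := F)
      (MvPolynomial.isHomogeneous_X R i) (Nat.le_add_left 1 d)

variable {φ : MvPolynomial ι R →ₐ[R] B} {i : ι}

theorem monotone_map_homogeneousSubmodule (hφ : φ (MvPolynomial.X i) = 1) :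
    Monotone fun d => (homogeneousSubmodule ι R d).map φ.toLinearMap := by
  refine monotone_nat_of_le_succ fun d => ?_
  rintro _ ⟨F, hF, rfl⟩
  exact ⟨F * MvPolynomial.X i, MvPolynomial.IsHomogeneous.mul hF (MvPolynomial.isHomogeneous_X R i),
    by simp [hφ]⟩

theorem apply_mem_map_homogeneousSubmodule_totalDegree (hφ : φ (MvPolynomial.X i) = 1)
    (F : MvPolynomial ι R) :
    φ F ∈ (homogeneousSubmodule ι R F.totalDegree).map φ.toLinearMap := by
  rw [show φ F = ∑ d ∈ Finset.range (F.totalDegree + 1), φ (homogeneousComponent d F) by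
    rw [← map_sum, MvPolynomial.sum_homogeneousComponent]]
  exact sum_mem fun d hd =>
    monotone_map_homogeneousSubmodule hφ (Nat.lt_succ_iff.mp (Finset.mem_range.mp hd))
      ⟨_, MvPolynomial.homogeneousComponent_isHomogeneous d F, rfl⟩

end CommSemiring

section CommRing

variable {ι R B : Type*} [CommRing R] [CommRing B] [Algebra R B]

theorem exists_X_pow_mul_mem_of_mem_sup_span_X_sub_one {I : Ideal (MvPolynomial ι R)}
    (hI : I.IsHomogeneous (homogeneousSubmodule ι R)) (i : ι) {F : MvPolynomial ι R} {d : ℕ}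
    (hF : F.IsHomogeneous d) (h : F ∈ I ⊔ Ideal.span {MvPolynomial.X i - 1}) :
    ∃ k : ℕ, MvPolynomial.X i ^ k * F ∈ I := by
  -- In the localization of `P / I` at `x_i`, the substitution `X_j ↦ x_j / x_i` kills both `I` and
  -- `X_i - 1`, and it sends `F` to `F / x_i ^ d`.
  let mk := Ideal.Quotient.mkₐ R I
  let L := Localization.Away (mk (MvPolynomial.X i))
  let loc : MvPolynomial ι R →ₐ[R] L := (IsScalarTower.toAlgHom R (_ ⧸ I) L).comp mk
  obtain ⟨c, hc⟩ : ∃ c : L, c * loc (MvPolynomial.X i) = 1 :=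
    (IsLocalization.Away.algebraMap_isUnit (mk (MvPolynomial.X i))).exists_left_inv
  let φ : MvPolynomial ι R →ₐ[R] L := MvPolynomial.aeval fun j => c * loc (MvPolynomial.X j)
  have hφ {G : MvPolynomial ι R} {e : ℕ} (hG : G.IsHomogeneous e) : φ G = c ^ e * loc G := by
    rw [MvPolynomial.aeval_unique loc]
    exact aeval_mul_of_isHomogeneous hG c _
  have hker : I ⊔ Ideal.span {MvPolynomial.X i - 1} ≤ RingHom.ker φ := by
    refine sup_le (fun G hG => ?_) ((Ideal.span_singleton_le_iff_mem _).mpr ?_)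
    · rw [← MvPolynomial.sum_homogeneousComponent G]
      refine sum_mem fun e _ => ?_
      have hmk : mk (homogeneousComponent e G) = 0 := Ideal.Quotient.eq_zero_iff_mem.mpr
        (MvPolynomial.homogeneousComponent_mem_of_mem hI hG e)
      rw [RingHom.mem_ker, hφ (MvPolynomial.homogeneousComponent_isHomogeneous e G),
        AlgHom.comp_apply, hmk, map_zero, mul_zero]
    · simp [φ, RingHom.mem_ker, hc]
  have hloc : loc F = 0 := by
    have hzero : c ^ d * loc F = 0 := (hφ hF).symm.trans (hker h)
    exact (IsUnit.of_mul_eq_one _ hc).pow d |>.mul_right_eq_zero.mp hzero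
  obtain ⟨⟨_, k, rfl⟩, hk⟩ := (IsLocalization.map_eq_zero_iff (.powers (mk (.X i))) L _).mp hloc
  exact ⟨k, Ideal.Quotient.eq_zero_iff_mem.mp (by simpa [mk] using hk)⟩

variable {φ : MvPolynomial ι R →ₐ[R] B} {i : ι}

theorem map_homogeneousSubmodule_succ_le {I : Ideal (MvPolynomial ι R)}
    (hI : I.IsHomogeneous (homogeneousSubmodule ι R)) (hIφ : I ≤ RingHom.ker φ)
    (hφ : φ (MvPolynomial.X i) = 1) {N : ℕ}
    (hN : idealOfVars ι R ^ N ≤ I ⊔ Ideal.span {MvPolynomial.X i}) {d : ℕ} (hd : N ≤ d) :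
    (homogeneousSubmodule ι R (d + 1)).map φ.toLinearMap ≤
      (homogeneousSubmodule ι R d).map φ.toLinearMap := by
  rintro _ ⟨F, hF, rfl⟩
  replace hF : F.IsHomogeneous (d + 1) := hF
  have hFN : F ∈ idealOfVars ι R ^ N := by
    refine (MvPolynomial.mem_pow_idealOfVars_iff N F).mpr fun m hm => ?_
    have := hF.degree_eq_sum_deg_support hm
    rw [Finsupp.degree_apply]
    omega
  obtain ⟨u, hu, w, hw, hFuw⟩ := Submodule.mem_sup.mp (hN hFN)
  obtain ⟨v, rfl⟩ := Ideal.mem_span_singleton.mp hw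
  have hFv : F = homogeneousComponent (d + 1) u + MvPolynomial.X i * homogeneousComponent d v := by
    rw [← homogeneousComponent_succ_X_mul, ← map_add, hFuw,
      MvPolynomial.homogeneousComponent_eq_self hF]
  have huφ : φ (homogeneousComponent (d + 1) u) = 0 :=
    hIφ (MvPolynomial.homogeneousComponent_mem_of_mem hI hu _)
  refine ⟨_, MvPolynomial.homogeneousComponent_isHomogeneous d v, ?_⟩
  rw [hFv]
  simp [huφ, hφ]

theorem map_homogeneousSubmodule_eq_range {I : Ideal (MvPolynomial ι R)}
    (hI : I.IsHomogeneous (homogeneousSubmodule ι R)) (hIφ : I ≤ RingHom.ker φ)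
    (hφ : φ (MvPolynomial.X i) = 1) {N : ℕ}
    (hN : idealOfVars ι R ^ N ≤ I ⊔ Ideal.span {MvPolynomial.X i}) :
    (homogeneousSubmodule ι R N).map φ.toLinearMap = LinearMap.range φ.toLinearMap := by
  refine le_antisymm LinearMap.map_le_range ?_
  rintro _ ⟨F, rfl⟩
  have hle : ∀ d, N ≤ d → (homogeneousSubmodule ι R d).map φ.toLinearMap ≤
      (homogeneousSubmodule ι R N).map φ.toLinearMap := fun d hd =>
    Nat.le_induction le_rfl
      (fun e he ih => (map_homogeneousSubmodule_succ_le hI hIφ hφ hN he).trans ih) d hd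
  exact hle _ (le_max_left N F.totalDegree) (monotone_map_homogeneousSubmodule hφ
    (le_max_right N F.totalDegree) (apply_mem_map_homogeneousSubmodule_totalDegree hφ F))

end CommRing

section LinearAlgebra

theorem finrank_map_eq_of_forall_mem_eq_zero_iff {K V W W' : Type*} [Ring K]
    [AddCommGroup V] [Module K V] [AddCommGroup W] [Module K W] [AddCommGroup W'] [Module K W']
    {U : Submodule K V} {f : V →ₗ[K] W} {g : V →ₗ[K] W'}
    (h : ∀ x ∈ U, f x = 0 ↔ g x = 0) :
    Module.finrank K (U.map f) = Module.finrank K (U.map g) := by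
  have hker : (f.domRestrict U).ker = (g.domRestrict U).ker := by
    ext ⟨x, hx⟩
    exact h x hx
  rw [← LinearMap.range_domRestrict, ← LinearMap.range_domRestrict]
  exact ((f.domRestrict U).quotKerEquivRange.symm ≪≫ₗ Submodule.quotEquivOfEq _ _ hker ≪≫ₗ
    (g.domRestrict U).quotKerEquivRange).finrank_eq

theorem ker_le_of_finrank_map_add_finrank_ker_eq {K V W : Type*} [DivisionRing K]
    [AddCommGroup V] [Module K V] [FiniteDimensional K V] [AddCommGroup W] [Module K W]
    {U : Submodule K V} {f : V →ₗ[K] W}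
    (h : Module.finrank K (U.map f) + Module.finrank K f.ker = Module.finrank K U) :
    f.ker ≤ U := by
  have hrank := (f.domRestrict U).finrank_range_add_finrank_ker
  have hker : Module.finrank K (f.domRestrict U).ker =
      Module.finrank K (f.ker ⊓ U : Submodule K V) := by
    rw [LinearMap.ker_domRestrict, ← Submodule.finrank_map_subtype_eq, Submodule.map_comap_subtype,
      inf_comm]
  rw [LinearMap.range_domRestrict, hker] at hrank
  exact inf_eq_left.mp (Submodule.eq_of_le_of_finrank_eq inf_le_left (by omega))

theorem exists_dual_apply_ne_zero_of_forall_lt_notMem {K V : Type*} [DivisionRing K]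
    [AddCommGroup V] [Module K V] {W : ℕ → Submodule K V} (hW : Monotone W) {i : ℕ} {b : V}
    (hb : b ≠ 0) (hi : ∀ j < i, b ∉ W j) :
    ∃ β : V →ₗ[K] K, β b ≠ 0 ∧ ∀ j < i, ∀ c ∈ W j, β c = 0 := by
  obtain _ | i := i
  · obtain ⟨β, hβ, -⟩ := Submodule.exists_le_ker_of_notMem (p := (⊥ : Submodule K V)) hb
    exact ⟨β, hβ, by simp⟩
  · obtain ⟨β, hβ, hker⟩ := Submodule.exists_le_ker_of_notMem (hi i i.lt_succ_self)
    exact ⟨β, hβ, fun j hj c hc => hker (hW (Nat.lt_succ_iff.mp hj) hc)⟩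

end LinearAlgebra

theorem exists_ne_zero_forall_mul_eq_zero_of_mem_maximalIdeal (R : Type*) [CommRing R]
    [IsLocalRing R] [IsArtinianRing R] :
    ∃ t : R, t ≠ 0 ∧ ∀ b ∈ IsLocalRing.maximalIdeal R, t * b = 0 := by
  obtain ⟨p, hp⟩ := associatedPrimes.nonempty R R
  obtain ⟨hprime, t, ht⟩ := isAssociatedPrime_iff.mp hp
  have hpm : p = IsLocalRing.maximalIdeal R := IsLocalRing.eq_maximalIdeal inferInstance
  refine ⟨t, ?_, fun b hb => ?_⟩
  · rintro rfl
    exact hprime.ne_top (ht.trans (by simp))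
  · rw [← hpm, ht, Submodule.mem_colon_singleton] at hb
    simpa [mul_comm] using hb

theorem mem_range_toLaurent_iff {R : Type*} [Semiring R] (x : LaurentPolynomial R) :
    x ∈ Set.range (Polynomial.toLaurent (R := R)) ↔ ∀ d < 0, x.coeff d = 0 := by
  constructor
  · rintro ⟨f, rfl⟩ d hd
    rw [LaurentPolynomial.coeff_toLaurent]
    exact Finsupp.mapDomain_of_notMem_range _ _
      (by rintro ⟨k, rfl⟩; exact hd.not_ge (Int.natCast_nonneg k))
  · intro hx
    rw [← AddMonoidAlgebra.sum_coeff_single x]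
    refine sum_mem (S := (Polynomial.toLaurent (R := R)).rangeS) fun d _ => ?_
    rcases lt_or_ge d 0 with h | h
    · simp [hx d h]
    · lift d to ℕ using h
      exact ⟨Polynomial.C (x.coeff d) * Polynomial.X ^ d, by
        rw [Polynomial.toLaurent_C_mul_X_pow, LaurentPolynomial.single_eq_C_mul_T]⟩

namespace ZeroDimSubscheme

variable {K : Type*} [Field K] {n : ℕ} (S : ZeroDimSubscheme K n)

/-! ### The homogeneous components of `R` as spaces of germs -/

theorem exists_pow_idealOfVars_le :
    ∃ N : ℕ, idealOfVars (Fin (n + 1)) K ^ N ≤ S.I ⊔ Ideal.span {MvPolynomial.X 0} := by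
  have hhom : (S.I ⊔ Ideal.span {MvPolynomial.X 0}).IsHomogeneous
      (homogeneousSubmodule (Fin (n + 1)) K) := by
    refine S.homogeneous.sup (Ideal.homogeneous_span _ _ ?_)
    rintro _ rfl
    exact ⟨1, MvPolynomial.isHomogeneous_X _ _⟩
  refine Ideal.exists_pow_le_of_le_radical_of_fg ?_ (MvPolynomial.idealOfVars_fg _ _)
  rw [hhom.radical_eq]
  refine le_sInf ?_
  rintro J ⟨hJhom, hJle, hJprime⟩
  have hirr : HomogeneousIdeal.irrelevant (homogeneousSubmodule (Fin (n + 1)) K) ≤ ⟨J, hJhom⟩ := by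
    by_contra hJirr
    exact S.X0_notMem ⟨⟨J, hJhom⟩, hJprime, hJirr⟩ (le_sup_left.trans hJle)
      (hJle (Ideal.mem_sup_right (Ideal.subset_span rfl)))
  rw [Ideal.span_le]
  rintro _ ⟨i, rfl⟩
  exact hirr (HomogeneousIdeal.mem_irrelevant_of_mem _ one_pos (MvPolynomial.isHomogeneous_X _ i))

theorem mem_I_of_X0_mul_mem {F : MvPolynomial (Fin (n + 1)) K}
    (hF : MvPolynomial.X 0 * F ∈ S.I) : F ∈ S.I := by
  obtain ⟨N, hN⟩ := S.exists_pow_idealOfVars_le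
  refine S.saturated F N fun G hG => ?_
  obtain ⟨u, hu, w, hw, rfl⟩ := Submodule.mem_sup.mp (hN hG)
  obtain ⟨v, rfl⟩ := Ideal.mem_span_singleton'.mp hw
  rw [add_mul, mul_assoc]
  exact add_mem (S.I.mul_mem_right _ hu) (S.I.mul_mem_left _ hF)

theorem mem_I_of_X0_pow_mul_mem {F : MvPolynomial (Fin (n + 1)) K} (k : ℕ)
    (hF : MvPolynomial.X 0 ^ k * F ∈ S.I) : F ∈ S.I := by
  induction k with
  | zero => simpa using hF
  | succ k ih => exact ih (S.mem_I_of_X0_mul_mem (by rwa [← mul_assoc, ← pow_succ']))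

theorem mkA_X0 : S.mkA (MvPolynomial.X 0) = 1 := by
  rw [← map_one S.mkA]
  exact Ideal.Quotient.eq.mpr (Ideal.mem_sup_right (Ideal.subset_span rfl))

theorem I_le_ker_mkA : S.I ≤ RingHom.ker S.mkA := fun _ hF =>
  Ideal.Quotient.eq_zero_iff_mem.mpr (Ideal.mem_sup_left hF)

theorem mkA_eq_zero_iff {F : MvPolynomial (Fin (n + 1)) K} {i : ℕ} (hF : F.IsHomogeneous i) :
    S.mkA F = 0 ↔ F ∈ S.I := by
  refine ⟨fun h => ?_, fun h => S.I_le_ker_mkA h⟩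
  obtain ⟨k, hk⟩ := exists_X_pow_mul_mem_of_mem_sup_span_X_sub_one S.homogeneous 0 hF
    (Ideal.Quotient.eq_zero_iff_mem.mp h)
  exact S.mem_I_of_X0_pow_mul_mem k hk

theorem exists_map_mkA_homogeneousSubmodule_eq_top :
    ∃ N, (homogeneousSubmodule (Fin (n + 1)) K N).map S.mkA.toLinearMap = ⊤ := by
  obtain ⟨N, hN⟩ := S.exists_pow_idealOfVars_le
  refine ⟨N, ?_⟩
  rw [map_homogeneousSubmodule_eq_range S.homogeneous S.I_le_ker_mkA S.mkA_X0 hN]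
  exact LinearMap.range_eq_top.mpr Ideal.Quotient.mk_surjective

instance : Module.Finite K S.A := by
  obtain ⟨N, hN⟩ := S.exists_map_mkA_homogeneousSubmodule_eq_top
  rw [Module.finite_def, ← hN]
  exact (MvPolynomial.homogeneousSubmodule_fg _ _ N).map _

instance : IsArtinianRing S.A := IsArtinianRing.of_finite K S.A

instance (p : S.Supp) : Module.Finite K (S.O p) :=
  Module.Finite.of_surjective (IsScalarTower.toAlgHom K S.A (S.O p)).toLinearMap
    (IsArtinianRing.localization_surjective p.asIdeal.primeCompl (S.O p))

instance (p : S.Supp) : IsArtinianRing (S.O p) := IsArtinianRing.of_finite K (S.O p)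

/-- The product `∏_p 𝒪_{𝕏,p}` of all local rings of `𝕏`. Every homogeneous component of
`Q^h(R)` is a copy of it. -/
abbrev Germs : Type _ := ∀ p : S.Supp, S.O p

/-- The map sending a homogeneous polynomial to the tuple of its germs at the points of `𝕏`
(trivialized by the powers of `x₀`). -/
def germs : MvPolynomial (Fin (n + 1)) K →ₐ[K] S.Germs :=
  AlgHom.pi fun p => (IsScalarTower.toAlgHom K S.A (S.O p)).comp S.mkA

theorem germs_apply (F : MvPolynomial (Fin (n + 1)) K) (p : S.Supp) :
    S.germs F p = algebraMap S.A (S.O p) (S.mkA F) := rfl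

theorem germs_eq_zero_iff {F : MvPolynomial (Fin (n + 1)) K} {i : ℕ} (hF : F.IsHomogeneous i) :
    S.germs F = 0 ↔ F ∈ S.I := by
  rw [← S.mkA_eq_zero_iff hF]
  exact map_eq_zero_iff _ (MaximalSpectrum.toPiLocalization_injective S.A)

theorem finrank_germs : Module.finrank K S.Germs = S.deg := by
  have := Fintype.ofFinite S.Supp
  rw [Module.finrank_pi_fintype, deg, finsum_eq_sum_of_fintype]

/-- The homogeneous component `R_i`, regarded as a subspace of `R̃_i = ∏_p 𝒪_{𝕏,p}`. -/
def homogeneousGerms (i : ℕ) : Submodule K S.Germs :=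
  (homogeneousSubmodule (Fin (n + 1)) K i).map S.germs.toLinearMap

theorem germs_mem_homogeneousGerms {F : MvPolynomial (Fin (n + 1)) K} {i : ℕ}
    (hF : F.IsHomogeneous i) : S.germs F ∈ S.homogeneousGerms i :=
  Submodule.mem_map_of_mem hF

theorem germs_X0 : S.germs (MvPolynomial.X 0) = 1 :=
  funext fun p => by rw [germs_apply, mkA_X0, map_one, Pi.one_apply]

theorem homogeneousGerms_mono : Monotone S.homogeneousGerms :=
  monotone_map_homogeneousSubmodule S.germs_X0

theorem HF_eq_finrank_homogeneousGerms (i : ℕ) :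
    S.HF i = Module.finrank K (S.homogeneousGerms i) :=
  finrank_map_eq_of_forall_mem_eq_zero_iff fun _ hF =>
    Ideal.Quotient.eq_zero_iff_mem.trans (S.germs_eq_zero_iff hF).symm

theorem exists_homogeneousGerms_eq_top : ∃ N, S.homogeneousGerms N = ⊤ := by
  obtain ⟨N, hN⟩ := S.exists_map_mkA_homogeneousSubmodule_eq_top
  refine ⟨N, eq_top_iff.mpr fun b _ => ?_⟩
  obtain ⟨a, rfl⟩ := (MaximalSpectrum.toPiLocalizationEquiv S.A).surjective b
  obtain ⟨F, hF, rfl⟩ := hN.ge (Submodule.mem_top : a ∈ ⊤)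
  exact S.germs_mem_homogeneousGerms hF

theorem homogeneousGerms_rX : S.homogeneousGerms S.rX = ⊤ := by
  have hne : {i : ℕ | ∀ j, i ≤ j → S.HF j = S.deg}.Nonempty := by
    obtain ⟨N, hN⟩ := S.exists_homogeneousGerms_eq_top
    refine ⟨N, fun j hj => ?_⟩
    have htop : S.homogeneousGerms j = ⊤ := eq_top_iff.mpr (hN ▸ S.homogeneousGerms_mono hj)
    rw [HF_eq_finrank_homogeneousGerms, htop, finrank_top, finrank_germs]
  refine Submodule.eq_top_of_finrank_eq ?_
  rw [← HF_eq_finrank_homogeneousGerms, finrank_germs]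
  exact Nat.sInf_mem hne S.rX le_rfl

open scoped Classical in
/-- The tuple of germs `(0, …, 0, a, 0, …, 0)` concentrated at `p`. -/
def single (p : S.Supp) : S.O p →ₗ[K] S.Germs := LinearMap.single K S.O p

variable {S} in
theorem single_apply_same (p : S.Supp) (a : S.O p) : S.single p a p = a := by simp [single]

variable {S} in
theorem single_apply_of_ne {p q : S.Supp} (h : q ≠ p) (a : S.O p) : S.single p a q = 0 := by
  simp [single, h]

theorem mul_single (b : S.Germs) (p : S.Supp) (a : S.O p) :
    b * S.single p a = S.single p (b p * a) := by
  funext q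
  by_cases h : q = p
  · subst h
    simp only [Pi.mul_apply, single_apply_same]
  · simp only [Pi.mul_apply, single_apply_of_ne h, mul_zero]

theorem sum_single [Fintype S.Supp] (b : S.Germs) : ∑ p, S.single p (b p) = b := by
  classical exact Finset.univ_sum_single b

/-! ### Homogeneous elements of `Q^h(R)` -/

/-- The homogeneous element `(b_1 T_1ᵈ, …, b_s T_sᵈ)` of `Q^h(R)`. -/
def monomial (d : ℤ) : S.Germs →+ S.Q where
  toFun b := fun p => AddMonoidAlgebra.single d (b p)
  map_zero' := funext fun _ => AddMonoidAlgebra.single_zero d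
  map_add' _ _ := funext fun _ => AddMonoidAlgebra.single_add d _ _

/-- The tuple of coefficients of `T_1ᵈ, …, T_sᵈ` in an element of `Q^h(R)`. -/
def coeff (d : ℤ) : S.Q →+ S.Germs where
  toFun x := fun p => (x p).coeff d
  map_zero' := rfl
  map_add' _ _ := rfl

theorem monomial_apply (d : ℤ) (b : S.Germs) (p : S.Supp) :
    S.monomial d b p = AddMonoidAlgebra.single d (b p) := rfl

variable {S} in
theorem ext_coeff {x y : S.Q} (h : ∀ d, S.coeff d x = S.coeff d y) : x = y :=
  funext fun p => LaurentPolynomial.ext fun d => congrFun (h d) p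

theorem coeff_monomial (d e : ℤ) (b : S.Germs) :
    S.coeff d (S.monomial e b) = if d = e then b else 0 := by
  funext p
  change Finsupp.single e (b p) d = _
  rw [Finsupp.single_apply]
  split_ifs <;> simp_all

theorem coeff_monomial_mul (d e : ℤ) (b : S.Germs) (x : S.Q) :
    S.coeff d (S.monomial e b * x) = b * S.coeff (d - e) x := by
  funext p
  change (AddMonoidAlgebra.single e (b p) * x p).coeff d = b p * (x p).coeff (d - e)
  rw [AddMonoidAlgebra.coeff_single_mul_apply, neg_add_eq_sub]

theorem monomial_mul_monomial (d e : ℤ) (b c : S.Germs) :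
    S.monomial d b * S.monomial e c = S.monomial (d + e) (b * c) :=
  funext fun _ => AddMonoidAlgebra.single_mul_single ..

theorem algebraMap_single (d : ℤ) (c : K) :
    algebraMap (LaurentPolynomial K) S.Q (AddMonoidAlgebra.single d c) =
      S.monomial d (algebraMap K S.Germs c) :=
  funext fun _ => AddMonoidAlgebra.mapRingHom_single ..

theorem single_smul_monomial (d e : ℤ) (c : K) (b : S.Germs) :
    (AddMonoidAlgebra.single d c : LaurentPolynomial K) • S.monomial e b =
      S.monomial (d + e) (c • b) := by
  rw [Algebra.smul_def, algebraMap_single, monomial_mul_monomial, ← Algebra.smul_def]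

theorem monomial_induction {motive : S.Q → Prop} (x : S.Q) (zero : motive 0)
    (add : ∀ y z, motive y → motive z → motive (y + z))
    (monomial : ∀ d, motive (S.monomial d (S.coeff d x))) : motive x := by
  classical
  have := Fintype.ofFinite S.Supp
  let s : Finset ℤ := Finset.univ.biUnion fun p => (x p).coeff.support
  have hs (d : ℤ) (hd : d ∉ s) : S.coeff d x = 0 := by
    funext p
    simp only [s, Finset.mem_biUnion, Finset.mem_univ, true_and, not_exists] at hd
    exact Finsupp.notMem_support_iff.mp (hd p)
  have hx : ∑ d ∈ s, S.monomial d (S.coeff d x) = x := by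
    refine ext_coeff fun e => ?_
    simp only [map_sum, coeff_monomial, Finset.sum_ite_eq]
    split_ifs with he
    exacts [rfl, (hs e he).symm]
  rw [← hx]
  exact Finset.sum_induction _ motive add zero fun d _ => monomial d

open scoped Classical in
theorem monomial_single (d : ℤ) (p : S.Supp) (a : S.O p) :
    S.monomial d (S.single p a) =
      (Pi.single p (LaurentPolynomial.C a * LaurentPolynomial.T d) :
        ∀ q, LaurentPolynomial (S.O q)) := by
  funext q
  rw [monomial_apply]
  by_cases h : q = p
  · subst h
    rw [single_apply_same, Pi.single_eq_same, LaurentPolynomial.single_eq_C_mul_T]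
  · rw [single_apply_of_ne h, Pi.single_eq_of_ne h, AddMonoidAlgebra.single_zero]

theorem iota_mkR {F : MvPolynomial (Fin (n + 1)) K} {i : ℕ} (hF : F.IsHomogeneous i) :
    S.iota (S.mkR F) = S.monomial i (S.germs F) := by
  funext p
  change Polynomial.toLaurent (S.germ p F) = _
  rw [germ, AlgHom.comp_apply, S.homA_of_homogeneous hF, monomial_apply, germs_apply,
    LaurentPolynomial.single_eq_C_mul_T]
  simp

variable {S} in
theorem monomial_mem_range_iota {i : ℕ} {b : S.Germs} (hb : b ∈ S.homogeneousGerms i) :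
    S.monomial i b ∈ Set.range S.iota := by
  obtain ⟨F, hF, rfl⟩ := hb
  exact ⟨S.mkR F, S.iota_mkR hF⟩

theorem induction_on_homogeneous {motive : S.R → Prop} (r : S.R)
    (add : ∀ x y, motive x → motive y → motive (x + y))
    (homogeneous : ∀ (i : ℕ) (F : MvPolynomial (Fin (n + 1)) K),
      F.IsHomogeneous i → motive (S.mkR F)) : motive r := by
  obtain ⟨F, rfl⟩ := Ideal.Quotient.mk_surjective r
  change motive (S.mkR F)
  rw [← MvPolynomial.sum_homogeneousComponent F, map_sum]
  refine Finset.sum_induction _ motive add ?_ fun d _ =>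
    homogeneous d _ (MvPolynomial.homogeneousComponent_isHomogeneous d F)
  rw [← map_zero S.mkR]
  exact homogeneous 0 0 (MvPolynomial.isHomogeneous_zero _ _ _)

theorem iota_algebraMap (f : K[X]) :
    S.iota (algebraMap K[X] S.R f) =
      algebraMap (LaurentPolynomial K) S.Q (Polynomial.toLaurent f) := by
  induction f using Polynomial.induction_on' with
  | add f g hf hg => simp only [map_add, hf, hg]
  | monomial k c =>
    have hmk : algebraMap K[X] S.R (Polynomial.monomial k c) =
        S.mkR (MvPolynomial.C c * MvPolynomial.X 0 ^ k) := by
      rw [map_mul, map_pow]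
      exact (Polynomial.aeval_monomial S.x0).trans (congrArg (· * _) (S.mkR.commutes c).symm)
    rw [hmk, S.iota_mkR (MvPolynomial.isHomogeneous_C_mul_X_pow c 0 k),
      Polynomial.toLaurent_C_mul_T, ← LaurentPolynomial.single_eq_C_mul_T, algebraMap_single,
      map_mul, map_pow, germs_X0, one_pow, mul_one]
    exact congrArg _ (S.germs.commutes c)

theorem mem_Rtilde_iff {x : S.Q} : x ∈ S.Rtilde ↔ ∀ d < 0, S.coeff d x = 0 := by
  constructor
  · rintro ⟨y, rfl⟩ d hd
    exact funext fun p => (mem_range_toLaurent_iff _).mp ⟨y p, rfl⟩ d hd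
  · intro hx
    choose y hy using fun p =>
      (mem_range_toLaurent_iff (x p)).mpr fun d hd => congrFun (hx d hd) p
    exact ⟨y, funext hy⟩

theorem monomial_mem_Rtilde (k : ℕ) (b : S.Germs) : S.monomial k b ∈ S.Rtilde :=
  S.mem_Rtilde_iff.mpr fun d hd => by rw [coeff_monomial, if_neg (by omega)]

variable {S}

theorem Rtilde_induction {motive : S.Q → Prop} {x : S.Q} (hx : x ∈ S.Rtilde)
    (add : ∀ y z, motive y → motive z → motive (y + z))
    (monomial : ∀ (k : ℕ) (b : S.Germs), motive (S.monomial k b)) : motive x := by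
  have zero : motive 0 := by simpa only [map_zero] using monomial 0 0
  refine S.monomial_induction x zero add fun d => ?_
  rcases lt_or_ge d 0 with hd | hd
  · rwa [S.mem_Rtilde_iff.mp hx d hd, map_zero]
  · lift d to ℕ using hd
    exact monomial d _

theorem monomial_mem_conductor {i : ℕ} {b : S.Germs} (hb : ∀ c, b * c ∈ S.homogeneousGerms i) :
    S.monomial i b ∈ S.conductor := by
  refine ⟨S.monomial_mem_Rtilde i b, fun y hy => ?_⟩
  refine Rtilde_induction (motive := fun y => S.monomial i b * y ∈ (1 : Submodule S.R S.Q)) hy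
    (fun y z hy hz => ?_) fun k c => ?_
  · rw [mul_add]
    exact add_mem hy hz
  · rw [monomial_mul_monomial, ← Nat.cast_add]
    exact Submodule.mem_one.mpr <|
      monomial_mem_range_iota (S.homogeneousGerms_mono (Nat.le_add_right i k) (hb c))

/-! ### Trace maps -/

variable {σ : S.Q →ₗ[LaurentPolynomial K] LaurentPolynomial K}

/-- The `K`-linear form on `∏_p 𝒪_{𝕏,p}` given by `σ` in degree zero. -/
def traceForm (σ : S.Q →ₗ[LaurentPolynomial K] LaurentPolynomial K) : S.Germs →ₗ[K] K where
  toFun b := (σ (S.monomial 0 b)).coeff 0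
  map_add' b c := by simp only [map_add]; rfl
  map_smul' c b := by
    have h := S.single_smul_monomial 0 0 c b
    rw [add_zero] at h
    rw [← h, map_smul, smul_eq_mul, AddMonoidAlgebra.coeff_single_mul_apply]
    simp

theorem IsTraceMap.apply_monomial (hσ : S.IsTraceMap σ) (d : ℤ) (b : S.Germs) :
    σ (S.monomial d b) = AddMonoidAlgebra.single d (traceForm σ b) := by
  obtain ⟨c, hc⟩ := hσ.degree_zero (S.monomial 0 b) 0 fun p =>
    ⟨b p, LaurentPolynomial.single_eq_C_mul_T ..⟩
  rw [← LaurentPolynomial.single_eq_C_mul_T] at hc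
  have htrace : traceForm σ b = c := by
    change (σ (S.monomial 0 b)).coeff 0 = c
    rw [hc]
    exact Finsupp.single_eq_same
  have hsmul := S.single_smul_monomial d 0 1 b
  rw [add_zero, one_smul] at hsmul
  rw [← hsmul, map_smul, hc, smul_eq_mul, AddMonoidAlgebra.single_mul_single, add_zero, one_mul,
    htrace]

theorem IsTraceMap.coeff_apply (hσ : S.IsTraceMap σ) (x : S.Q) (d : ℤ) :
    (σ x).coeff d = traceForm σ (S.coeff d x) := by
  induction x using S.monomial_induction with
  | zero => simp
  | add y z hy hz =>
    rw [map_add, map_add, map_add, ← hy, ← hz]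
    rfl
  | monomial e =>
    rw [hσ.apply_monomial, coeff_monomial]
    change Finsupp.single e _ d = _
    rw [Finsupp.single_apply]
    split_ifs <;> simp_all

theorem IsTraceMap.eq_zero_of_forall_traceForm_mul_eq_zero (hσ : S.IsTraceMap σ) {b : S.Germs}
    (hb : ∀ c, traceForm σ (b * c) = 0) : b = 0 := by
  have hSig : S.Sig σ (S.monomial 0 b) = S.Sig σ 0 := by
    refine LinearMap.ext fun x => LaurentPolynomial.ext fun d => ?_
    change (σ (S.monomial 0 b * x)).coeff d = (σ (0 * x)).coeff d
    rw [hσ.coeff_apply, coeff_monomial_mul, hb, zero_mul, map_zero]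
    rfl
  have hzero := congrArg (S.coeff 0) (hσ.basis.1 hSig)
  rwa [coeff_monomial, if_pos rfl, map_zero] at hzero

theorem IsTraceMap.exists_traceForm_mul_eq (hσ : S.IsTraceMap σ) (β : S.Germs →ₗ[K] K) :
    ∃ g, ∀ b, traceForm σ (g * b) = β b := by
  let pairing : S.Germs →ₗ[K] Module.Dual K S.Germs :=
    (LinearMap.mul K S.Germs).compr₂ (traceForm σ)
  have hinj : Function.Injective pairing := (injective_iff_map_eq_zero _).mpr fun b hb =>
    hσ.eq_zero_of_forall_traceForm_mul_eq_zero (LinearMap.congr_fun hb)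
  obtain ⟨g, hg⟩ := (LinearMap.injective_iff_surjective_of_finrank_eq_finrank
    Subspace.dual_finrank_eq.symm).mp hinj β
  exact ⟨g, LinearMap.congr_fun hg⟩

theorem mem_complementary_iff {g : S.Q} :
    g ∈ S.complementary σ ↔ ∀ r, ∀ d < 0, (σ (g * S.iota r)).coeff d = 0 := by
  constructor
  · rintro ⟨φ, hφ⟩ r
    exact (mem_range_toLaurent_iff _).mp ⟨φ r, (hφ r).symm⟩
  · intro hg
    choose φ hφ using fun r => (mem_range_toLaurent_iff _).mpr (hg r)
    refine ⟨{ toFun := φ, map_add' := fun r s => ?_, map_smul' := fun f r => ?_ },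
      fun r => (hφ r).symm⟩ <;> apply Polynomial.toLaurent_injective
    · rw [map_add, hφ, hφ, hφ, map_add, mul_add, map_add]
    · rw [RingHom.id_apply, smul_eq_mul, map_mul, hφ, hφ, Algebra.smul_def, S.iota.map_mul,
        iota_algebraMap, mul_left_comm, ← Algebra.smul_def, map_smul, smul_eq_mul]

theorem IsTraceMap.conductor_mul_complementary_le (hσ : S.IsTraceMap σ) :
    S.conductor * S.complementary σ ≤ S.Rtilde := by
  refine Submodule.mul_le.mpr fun f hf g hg => S.mem_Rtilde_iff.mpr fun d hd => ?_
  refine hσ.eq_zero_of_forall_traceForm_mul_eq_zero fun c => ?_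
  obtain ⟨r, hr⟩ := Submodule.mem_one.mp (hf.2 _ (S.monomial_mem_Rtilde 0 c))
  have hcoeff : S.coeff d (f * g) * c = S.coeff d (g * S.iota r) := by
    rw [show S.iota r = f * S.monomial (0 : ℕ) c from hr,
      show g * (f * S.monomial (0 : ℕ) c) = S.monomial (0 : ℕ) c * (f * g) by ring,
      coeff_monomial_mul, Nat.cast_zero, sub_zero, mul_comm]
  rw [hcoeff, ← hσ.coeff_apply]
  exact mem_complementary_iff.mp hg r d hd

theorem IsTraceMap.monomial_neg_mem_complementary (hσ : S.IsTraceMap σ) {i : ℕ} {g : S.Germs}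
    (hg : ∀ j < i, ∀ b ∈ S.homogeneousGerms j, traceForm σ (g * b) = 0) :
    S.monomial (-i) g ∈ S.complementary σ := by
  refine mem_complementary_iff.mpr fun r d hd => ?_
  rw [hσ.coeff_apply, coeff_monomial_mul]
  induction r using S.induction_on_homogeneous with
  | add x y hx hy => rw [map_add, map_add, mul_add, map_add, hx, hy, add_zero]
  | homogeneous j F hF =>
    rw [S.iota_mkR hF, coeff_monomial]
    split_ifs with hj
    · exact hg j (by omega) _ (S.germs_mem_homogeneousGerms hF)
    · rw [mul_zero, map_zero]

/-! ### Dedekind's formula from sharp socle degrees -/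

/-- In degree `i` all of `𝒪_{𝕏,p} T_pⁱ` lies in `R`, while some nonzero socle element of
`𝒪_{𝕏,p}` does not occur in any smaller degree of `R`. The existence of such a degree at every `p`
is what Dedekind's formula is derived from. -/
def IsSocleSharpAt (p : S.Supp) (i : ℕ) : Prop :=
  (∀ a, S.single p a ∈ S.homogeneousGerms i) ∧
    ∃ t : S.O p, t ≠ 0 ∧ (∀ b ∈ IsLocalRing.maximalIdeal (S.O p), t * b = 0) ∧
      ∀ j < i, S.single p t ∉ S.homogeneousGerms j

theorem IsTraceMap.exists_isUnit_apply_and_forall_traceForm_mul_eq_zero (hσ : S.IsTraceMap σ)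
    {p : S.Supp} {i : ℕ} (hp : IsSocleSharpAt p i) :
    ∃ g : S.Germs, IsUnit (g p) ∧
      ∀ j < i, ∀ b ∈ S.homogeneousGerms j, traceForm σ (g * b) = 0 := by
  obtain ⟨-, t, ht, hsocle, hi⟩ := hp
  have hne : S.single p t ≠ 0 := fun h => ht (by rw [← single_apply_same p t, h, Pi.zero_apply])
  obtain ⟨β, hβt, hβ⟩ :=
    exists_dual_apply_ne_zero_of_forall_lt_notMem S.homogeneousGerms_mono hne hi
  obtain ⟨g, hg⟩ := hσ.exists_traceForm_mul_eq β
  refine ⟨g, ?_, fun j hj b hb => (hg b).trans (hβ j hj b hb)⟩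
  by_contra hunit
  refine hβt ?_
  rw [← hg, mul_single, mul_comm, hsocle _ hunit, map_zero, map_zero]

theorem IsTraceMap.monomial_single_mem_conductor_mul_complementary (hσ : S.IsTraceMap σ)
    {p : S.Supp} {i : ℕ} (hp : IsSocleSharpAt p i) (k : ℕ) (a : S.O p) :
    S.monomial k (S.single p a) ∈ S.conductor * S.complementary σ := by
  obtain ⟨g, ⟨u, hu⟩, hg⟩ := hσ.exists_isUnit_apply_and_forall_traceForm_mul_eq_zero hp
  have hfactor : S.monomial k (S.single p a) =
      S.monomial (k + i : ℕ) (S.single p (↑u⁻¹ * a)) * S.monomial (-i) g := by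
    rw [monomial_mul_monomial, mul_comm (S.single p _), mul_single, ← hu, Units.mul_inv_cancel_left,
      Nat.cast_add, add_neg_cancel_right]
  rw [hfactor]
  refine Submodule.mul_mem_mul (monomial_mem_conductor fun c => ?_)
    (hσ.monomial_neg_mem_complementary hg)
  rw [mul_comm, mul_single]
  exact S.homogeneousGerms_mono (Nat.le_add_left i k) (hp.1 _)

theorem IsTraceMap.Rtilde_le_conductor_mul_complementary (hσ : S.IsTraceMap σ)
    (hS : ∀ p : S.Supp, ∃ i, IsSocleSharpAt p i) :
    S.Rtilde ≤ S.conductor * S.complementary σ := by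
  intro x hx
  have := Fintype.ofFinite S.Supp
  refine Rtilde_induction hx (fun _ _ => add_mem) fun k b => ?_
  rw [← S.sum_single b, map_sum]
  refine sum_mem fun p _ => ?_
  obtain ⟨i, hp⟩ := hS p
  exact hσ.monomial_single_mem_conductor_mul_complementary hp k (b p)

/-! ### Sharp socle degrees -/

theorem single_notMem_homogeneousGerms_of_lt_mu {p : S.Supp} {a : S.O p} {j : ℕ}
    (hj : j < S.mu p a) : S.single p a ∉ S.homogeneousGerms j := by
  intro ha
  refine Nat.notMem_of_lt_sInf hj ?_
  rw [Set.mem_ofPred_eq, ← monomial_single]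
  exact monomial_mem_range_iota ha

theorem IsCayleyBacharach.exists_le_mu (hS : S.IsCayleyBacharach) (p : S.Supp)
    (hr : 0 < S.rX) :
    ∃ t : S.O p, (∀ b ∈ IsLocalRing.maximalIdeal (S.O p), t * b = 0) ∧ S.rX ≤ S.mu p t := by
  have hdeg : 0 < S.degAt p := hr.trans_le (hS p)
  obtain ⟨_, -, s, e, hs, -, hm⟩ := Nat.sInf_mem (Nat.nonempty_of_pos_sInf hdeg)
  have hle : S.rX ≤ S.maxSepDegree p s e := (hS p).trans_eq hm
  obtain ⟨k, -, hk⟩ := (Finset.le_sup_iff hr).mp hle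
  exact ⟨e k * s, fun b hb => by rw [mul_assoc, hs.socle b hb, mul_zero], hk⟩

theorem IsCayleyBacharach.isSocleSharpAt_rX (hS : S.IsCayleyBacharach) (p : S.Supp) :
    IsSocleSharpAt p S.rX := by
  refine ⟨fun a => S.homogeneousGerms_rX ▸ Submodule.mem_top, ?_⟩
  rcases S.rX.eq_zero_or_pos with hr | hr
  · obtain ⟨t, ht, hsocle⟩ := exists_ne_zero_forall_mul_eq_zero_of_mem_maximalIdeal (S.O p)
    exact ⟨t, ht, hsocle, by simp [hr]⟩
  · obtain ⟨t, hsocle, hmu⟩ := hS.exists_le_mu p hr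
    have hnot (j : ℕ) (hj : j < S.rX) : S.single p t ∉ S.homogeneousGerms j :=
      single_notMem_homogeneousGerms_of_lt_mu (hj.trans_le hmu)
    refine ⟨t, ?_, hsocle, hnot⟩
    rintro rfl
    exact hnot 0 hr (by rw [map_zero]; exact zero_mem _)

theorem mem_IY_iff {p : S.Supp} {F : MvPolynomial (Fin (n + 1)) K} {i : ℕ}
    (hF : F.IsHomogeneous i) : F ∈ S.IY p ↔ ∀ q ≠ p, S.germs F q = 0 := by
  simp only [IY, Ideal.mem_iInf, vanishingIdealAt, RingHom.mem_ker, germ, AlgHom.comp_apply,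
    S.homA_of_homogeneous hF]
  refine forall₂_congr fun q _ => ?_
  simp [germs_apply, Polynomial.C_mul_X_pow_eq_monomial]

theorem single_notMem_homogeneousGerms_of_lt_alphaY {p : S.Supp} {a : S.O p} (ha : a ≠ 0) {j : ℕ}
    (hj : j < S.alphaY p) : S.single p a ∉ S.homogeneousGerms j := by
  rintro ⟨F, hF, hFa⟩
  replace hFa : S.germs F = S.single p a := hFa
  have hFY : F ∈ S.IY p := (mem_IY_iff hF).mpr fun q hq => by rw [hFa, single_apply_of_ne hq]
  refine Nat.notMem_of_lt_sInf hj
    ⟨S.mkR F, ⟨F, hF, rfl⟩, Ideal.mem_map_of_mem _ hFY, fun h => ha ?_⟩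
  have hzero := (S.germs_eq_zero_iff hF).mpr (Ideal.Quotient.eq_zero_iff_mem.mp h)
  rw [← single_apply_same p a, ← hFa, hzero, Pi.zero_apply]

/-- The projection of `∏_q 𝒪_{𝕏,q}` onto `∏_{q ≠ p} 𝒪_{𝕏,q}`. -/
def projAway (p : S.Supp) : S.Germs →ₗ[K] ∀ q : {q : S.Supp // q ≠ p}, S.O q :=
  LinearMap.pi fun q => LinearMap.proj q.1

theorem projAway_eq_zero_iff {p : S.Supp} {b : S.Germs} :
    projAway p b = 0 ↔ ∀ q ≠ p, b q = 0 :=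
  funext_iff.trans Subtype.forall

theorem ker_projAway (p : S.Supp) : (projAway p).ker = LinearMap.range (S.single p) := by
  ext b
  rw [LinearMap.mem_ker, projAway_eq_zero_iff]
  constructor
  · intro hb
    refine ⟨b p, funext fun q => ?_⟩
    by_cases hq : q = p
    · subst hq
      exact single_apply_same ..
    · rw [single_apply_of_ne hq, hb q hq]
  · rintro ⟨a, rfl⟩ q hq
    exact single_apply_of_ne hq a

theorem finrank_ker_projAway (p : S.Supp) : Module.finrank K (projAway p).ker = S.nu p := by
  rw [ker_projAway, LinearMap.finrank_range_of_inj, nu]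
  exact Function.LeftInverse.injective (g := fun b : S.Germs => b p) (single_apply_same p)

theorem HFY_eq_finrank_map_projAway (p : S.Supp) (i : ℕ) :
    S.HFY p i = Module.finrank K ((S.homogeneousGerms i).map (projAway p)) := by
  rw [homogeneousGerms, ← Submodule.map_comp]
  exact finrank_map_eq_of_forall_mem_eq_zero_iff fun F hF =>
    Ideal.Quotient.eq_zero_iff_mem.trans <| (mem_IY_iff hF).trans projAway_eq_zero_iff.symm

theorem single_mem_homogeneousGerms_of_HFY_add_nu_eq {p : S.Supp} {i : ℕ}
    (h : S.HFY p i + S.nu p = S.HF i) (a : S.O p) : S.single p a ∈ S.homogeneousGerms i := by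
  rw [HFY_eq_finrank_map_projAway, ← finrank_ker_projAway, HF_eq_finrank_homogeneousGerms] at h
  exact ker_le_of_finrank_map_add_finrank_ker_eq h (ker_projAway p ▸ ⟨a, rfl⟩)

theorem isSocleSharpAt_alphaY {p : S.Supp}
    (h : S.HFY p (S.alphaY p) + S.nu p = S.HF (S.alphaY p)) : IsSocleSharpAt p (S.alphaY p) := by
  obtain ⟨t, ht, hsocle⟩ := exists_ne_zero_forall_mul_eq_zero_of_mem_maximalIdeal (S.O p)
  exact ⟨single_mem_homogeneousGerms_of_HFY_add_nu_eq h, t, ht, hsocle,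
    fun j hj => single_notMem_homogeneousGerms_of_lt_alphaY ht hj⟩

end ZeroDimSubscheme

end

theorem dedekind_CB_stmt12 {K : Type*} [Field K] {n : ℕ} (S : ZeroDimSubscheme K n)
    (hG : S.LocallyGorenstein)
    (σ : S.Q →ₗ[LaurentPolynomial K] LaurentPolynomial K) (hσ : S.IsTraceMap σ)
    (h : S.IsCayleyBacharach ∨
      ∀ (p : S.Supp) (i : ℕ),
        (i < S.alphaY p → (S.HFY p i : ℤ) = S.HF i) ∧
        (S.alphaY p ≤ i → (S.HFY p i : ℤ) = S.HF i - S.nu p)) :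
    S.conductor * S.complementary σ = S.Rtilde := by
  have hsharp (p : S.Supp) : ∃ i, ZeroDimSubscheme.IsSocleSharpAt p i := by
    rcases h with hCB | hHF
    · exact ⟨S.rX, hCB.isSocleSharpAt_rX p⟩
    · have hα := (hHF p (S.alphaY p)).2 le_rfl
      exact ⟨S.alphaY p, ZeroDimSubscheme.isSocleSharpAt_alphaY (by omega)⟩
  exact le_antisymm hσ.conductor_mul_complementary_le
    (hσ.Rtilde_le_conductor_mul_complementary hsharp)
end

section
/- Let $K$ be a field, $P=K[X_0,\dots,X_n]$ with the standard grading, and let $\mathbb X\subseteq\mathbb P^n_K$ be a $0$-dimensional locally Gorenstein closed subscheme with support $\{p_1,\dots,p_s\}$, no point of which lies on the hyperplane $X_0=0$. Let $I_{\mathbb X}$ be its (saturated) homogeneous vanishing ideal, $R=P/I_{\mathbb X}$ its homogeneous coordinate ring, $x_0$ the image of $X_0$ in $R$, $\deg\mathbb X=\sum_j\dim_K\mathcal O_{\mathbb X,p_j}$, and $r_{\mathbb X}$ the least $i\ge 0$ with $\dim_K R_k=\deg\mathbb X$ for all $k\ge i$. Let $Q=Q^h(R)=\prod_{j=1}^s\mathcal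 O_{\mathbb X,p_j}[T_j,T_j^{-1}]$ be the homogeneous ring of quotients of $R$, with $R$ embedded by $f\mapsto(f_{p_1}T_1^i,\dots,f_{p_s}T_s^i)$ for $f\in R_i$, where $f_{p_j}$ is the germ at $p_j$ of $f/x_0^i$; let $\widetilde R=\prod_j\mathcal O_{\mathbb X,p_j}[T_j]\subseteq Q$, $L_0=K[x_0,x_0^{-1}]\subseteq Q$, and let $\mathfrak F_{\widetilde R/R}=\{f\in\widetilde R\mid f\widetilde R\subseteq R\}$ be the conductor. Let $\sigma$ be a homogeneous trace map of degree zero of $Q/L_0$, i.e. a homogeneous element of degree zero of $\operatorname{Hom}_{L_0}(Q,L_0)$ such that $\Sigma:Q\to\operatorname{Hom}_{L_0}(Q,L_0)$, $g\mapsto g\cdot\sigma$, is bijective. The Dedekind complementary module is $\mathfrak C^\sigma_{\mathbb X}=\{\Sigma^{-1}(\varphi\otimes\mathrm{id}_{L_0})\mid\varphi\in\operatorname{Hom}_{K[x_0]}(R,K[x_0])\}\subseteq Q$, the Dedekind different is $\delta^\sigma_{\mathbb X}=\{f\in Q\mid f\,\mathfrak C^\sigma_{\mathbb X}\subseteq R\}$,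 and $\operatorname{tr}(\mathfrak C^\sigma_{\mathbb X})=\sum_{\phi\in\operatorname{Hom}_R(\mathfrak C^\sigma_{\mathbb X},R)}\phi(\mathfrak C^\sigma_{\mathbb X})$. One says that $\mathbb X$ has minimal Dedekind different if $\delta^\sigma_{\mathbb X}=\bigoplus_{i\ge 2r_{\mathbb X}}R_i$. A maximal $p_j$-subscheme is a (possibly empty) closed subscheme $\mathbb Y\subseteq\mathbb X$ with $\mathcal O_{\mathbb Y,p_k}=\mathcal O_{\mathbb X,p_k}$ for $k\ne j$ and $\deg\mathbb Y=\deg\mathbb X-\dim_K\kappa(p_j)$, where $\kappa(p_j)$ is the residue field at $p_j$; its ideal in $\prod_k\mathcal O_{\mathbb X,p_k}$ is generated by $(0,\dots,0,s_j,0,\dots,0)$ for some nonzero socle element $s_j$ of $\mathcal O_{\mathbb X,p_j}$. For $a\in\mathcal O_{\mathbb X,p_j}$ let $\mu(a)=\min\{i\in\mathbb N\mid(0,\dots,0,aT_j^i,0,\dots,0)\in R\}$, and let $\mu_{\mathbb Y/\mathbb X}=\max_k\mu(e_ks_j)$, where $e_1,e_2,\dots\in\mathcal O_{\mathbb X,p_j}$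 are elements whose residue classes form a $K$-basis of $\kappa(p_j)$ (the value is independent of the choices). Let $\deg_{\mathbb X}(p_j)$ be the minimum of $\mu_{\mathbb Y/\mathbb X}$ over all maximal $p_j$-subschemes $\mathbb Y$ of $\mathbb X$. One calls $\mathbb X$ a Cayley–Bacharach scheme if $\deg_{\mathbb X}(p_j)\ge r_{\mathbb X}$ for all $j$. Then: (a) if $\mathbb X$ is a Cayley–Bacharach scheme, then $\mathfrak F_{\widetilde R/R}\subseteq\operatorname{tr}(\mathfrak C^\sigma_{\mathbb X})$; (b) $\mathbb X$ is a Cayley–Bacharach scheme with $\mathfrak F_{\widetilde R/R}=\operatorname{tr}(\mathfrak C^\sigma_{\mathbb X})$ if and only if $\mathbb X$ has minimal Dedekind different. -/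
/-! Zero-dimensional subschemes `𝕏` of projective `n`-space over a field `K`, no point of whose
support lies on the hyperplane `X₀ = 0`, together with their homogeneous coordinate ring, their
homogeneous ring of quotients, the conductor, the Dedekind complementary module, the Dedekind
different and the Cayley–Bacharach property. -/

open scoped LaurentPolynomial

universe u

noncomputable section

attribute [local instance] MvPolynomial.gradedAlgebra

/-- A 0-dimensional closed subscheme `𝕏 ⊆ ℙⁿ_K`, given by its homogeneous vanishing ideal
`I_𝕏 ⊆ P = K[X₀,…,Xₙ]`, such that no point of `𝕏` lies on `Z(X₀)`. -/
structure ZeroDimScheme (K : Type u) [Field K] (n : ℕ) where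
  /-- the homogeneous vanishing ideal `I_𝕏` -/
  I : Ideal (MvPolynomial (Fin (n + 1)) K)
  /-- `I_𝕏` is homogeneous for the standard grading -/
  homogeneous : I.IsHomogeneous (MvPolynomial.homogeneousSubmodule (Fin (n + 1)) K)
  /-- `I_𝕏` is saturated with respect to `⟨X₀,…,Xₙ⟩` -/
  saturated : ∀ F : MvPolynomial (Fin (n + 1)) K, (∀ k, MvPolynomial.X k * F ∈ I) → F ∈ I
  /-- `dim 𝕏 = 0`, i.e. the homogeneous coordinate ring has Krull dimension one -/
  dim_eq_zero : ringKrullDim (MvPolynomial (Fin (n + 1)) K ⧸ I) = 1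
  /-- no point of `𝕏` lies on `Z(X₀)`: a homogeneous prime ideal containing `I_𝕏` and `X₀`
  contains the irrelevant ideal -/
  avoids : ∀ 𝔭 : Ideal (MvPolynomial (Fin (n + 1)) K), 𝔭.IsPrime →
    𝔭.IsHomogeneous (MvPolynomial.homogeneousSubmodule (Fin (n + 1)) K) →
    I ≤ 𝔭 → MvPolynomial.X 0 ∈ 𝔭 → ∀ k, MvPolynomial.X k ∈ 𝔭

/-- A local (Noetherian) ring is Gorenstein if it has finite injective dimension as a module
over itself. -/
def IsGorensteinLocal (A : Type u) [CommRing A] : Prop :=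
  IsNoetherianRing A ∧ IsLocalRing A ∧
    ∃ d : ℕ, CategoryTheory.HasInjectiveDimensionLT (ModuleCat.of A A) d

namespace ZeroDimScheme

variable {K : Type u} [Field K] {n : ℕ} (X : ZeroDimScheme K n)

/-! ### The homogeneous coordinate ring -/

/-- The homogeneous coordinate ring `R = P / I_𝕏`. -/
abbrev R : Type u := MvPolynomial (Fin (n + 1)) K ⧸ X.I

/-- The homogeneous component `R_i`. -/
def Rdeg (i : ℕ) : Submodule K X.R :=
  (MvPolynomial.homogeneousSubmodule (Fin (n + 1)) K i).map
    (Ideal.Quotient.mkₐ K X.I).toLinearMap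

/-- The image `x₀` of `X₀` in `R`. -/
def x0 : X.R := Ideal.Quotient.mk X.I (MvPolynomial.X 0)

/-- The subring `K[x₀] ⊆ R`. -/
abbrev Kx0 : Subalgebra K X.R := Algebra.adjoin K {X.x0}

/-! ### Points and local rings -/

/-- The coordinate ring `P / (I_𝕏 + ⟨X₀ - 1⟩)` of `𝕏`, viewed as a closed subscheme of the
affine space `D₊(X₀)`; it is the ring of global sections of `𝕏`. -/
def affineRing : Type u :=
  MvPolynomial (Fin (n + 1)) K ⧸ (X.I ⊔ Ideal.span {MvPolynomial.X 0 - 1})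

instance : CommRing X.affineRing :=
  inferInstanceAs
    (CommRing (MvPolynomial (Fin (n + 1)) K ⧸ (X.I ⊔ Ideal.span {MvPolynomial.X 0 - 1})))

instance : Algebra K X.affineRing :=
  inferInstanceAs
    (Algebra K (MvPolynomial (Fin (n + 1)) K ⧸ (X.I ⊔ Ideal.span {MvPolynomial.X 0 - 1})))

/-- The residue class map `P → P / (I_𝕏 + ⟨X₀ - 1⟩)`. -/
def toAffine : MvPolynomial (Fin (n + 1)) K →ₐ[K] X.affineRing :=
  Ideal.Quotient.mkₐ K (X.I ⊔ Ideal.span {MvPolynomial.X 0 - 1})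

/-- The support of `𝕏`, i.e. its set of closed points. -/
abbrev Supp : Type u := MaximalSpectrum X.affineRing

/-- The local ring `𝒪_{𝕏,p}`. -/
abbrev localRing (p : X.Supp) : Type u := Localization.AtPrime p.asIdeal

/-- The germ at `p` of a polynomial; for `F` homogeneous of degree `i` it is the germ of
`F / X₀ⁱ`. -/
def germ (p : X.Supp) : MvPolynomial (Fin (n + 1)) K →ₐ[K] X.localRing p :=
  (IsScalarTower.toAlgHom K X.affineRing (X.localRing p)).comp X.toAffine

/-- The residue field `κ(p)`. -/
abbrev residueField (p : X.Supp) : Type u := IsLocalRing.ResidueField (X.localRing p)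

/-- `𝕏` is locally Gorenstein. -/
def LocallyGorenstein : Prop := ∀ p : X.Supp, IsGorensteinLocal (X.localRing p)

/-- `deg 𝕏 = ∑_p dim_K 𝒪_{𝕏,p}`. -/
def deg : ℕ := ∑ᶠ p : X.Supp, Module.finrank K (X.localRing p)

/-- The regularity index `r_𝕏`: the least `i` with `dim_K R_j = deg 𝕏` for all `j ≥ i`. -/
def reg : ℕ := sInf {i : ℕ | ∀ j, i ≤ j → Module.finrank K (X.Rdeg j) = X.deg}

/-! ### The homogeneous ring of quotients -/

/-- The homogeneous ring of quotients `Q^h(R) = ∏_p 𝒪_{𝕏,p}[T_p, T_p⁻¹]`. -/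
def Q : Type u := ∀ p : X.Supp, (X.localRing p)[T;T⁻¹]

instance : CommRing X.Q := inferInstanceAs (CommRing (∀ p : X.Supp, (X.localRing p)[T;T⁻¹]))

instance : Algebra K X.Q := inferInstanceAs (Algebra K (∀ p : X.Supp, (X.localRing p)[T;T⁻¹]))

/-- The element `(a_p T_pⁱ)_p` of `Q^h(R)`. -/
def mono (i : ℤ) (a : ∀ p : X.Supp, X.localRing p) : X.Q :=
  fun p => LaurentPolynomial.C (a p) * LaurentPolynomial.T i

/-- The homogeneous component of degree `i` of `Q^h(R)`. -/
def Qdeg (i : ℤ) : Set X.Q := Set.range (X.mono i)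

/-- The `K`-algebra homomorphism `P → Q^h(R)` with `X_k ↦ ((X_k)_p T_p)_p`. -/
def toQ : MvPolynomial (Fin (n + 1)) K →ₐ[K] X.Q :=
  MvPolynomial.aeval fun k => X.mono 1 fun p => X.germ p (MvPolynomial.X k)

lemma mono_mul (i j : ℤ) (a b : ∀ p : X.Supp, X.localRing p) :
    X.mono i a * X.mono j b = X.mono (i + j) (a * b) := by
  funext p
  change LaurentPolynomial.C (a p) * LaurentPolynomial.T i *
    (LaurentPolynomial.C (b p) * LaurentPolynomial.T j) =
    LaurentPolynomial.C (a p * b p) * LaurentPolynomial.T (i + j)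
  rw [LaurentPolynomial.T_add, map_mul]
  ring

lemma mono_one : X.mono 0 1 = 1 := by
  funext p
  change LaurentPolynomial.C (1 : X.localRing p) * LaurentPolynomial.T 0 = 1
  simp

lemma mono_add (i : ℤ) (a b : ∀ p : X.Supp, X.localRing p) :
    X.mono i a + X.mono i b = X.mono i (a + b) := by
  funext p
  change LaurentPolynomial.C (a p) * LaurentPolynomial.T i +
    LaurentPolynomial.C (b p) * LaurentPolynomial.T i =
    LaurentPolynomial.C (a p + b p) * LaurentPolynomial.T i
  rw [map_add, add_mul]

lemma mono_zero (i : ℤ) : X.mono i 0 = 0 := by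
  funext p
  change LaurentPolynomial.C (0 : X.localRing p) * LaurentPolynomial.T i = 0
  simp

lemma algebraMap_eq_mono (c : K) :
    algebraMap K X.Q c = X.mono 0 fun p => algebraMap K (X.localRing p) c := by
  funext p
  change algebraMap K (X.localRing p)[T;T⁻¹] c =
    LaurentPolynomial.C (algebraMap K (X.localRing p) c) * LaurentPolynomial.T 0
  simp only [LaurentPolynomial.T_zero, mul_one]
  rfl

/-- A homogeneous polynomial of degree `i` is sent to `(F_p T_pⁱ)_p`. -/
lemma toQ_of_isHomogeneous {i : ℕ} {F : MvPolynomial (Fin (n + 1)) K} (hF : F.IsHomogeneous i) :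
    X.toQ F = X.mono i fun p => X.germ p F := by
  have hmon : ∀ d : Fin (n + 1) →₀ ℕ, ∀ c : K,
      X.toQ (MvPolynomial.monomial d c) =
        X.mono (d.degree : ℕ) fun p => X.germ p (MvPolynomial.monomial d c) := by
    intro d c
    induction d using Finsupp.induction_linear generalizing c with
    | zero =>
      have h1 : MvPolynomial.monomial (0 : Fin (n + 1) →₀ ℕ) c = algebraMap K _ c := rfl
      rw [h1, AlgHom.commutes, algebraMap_eq_mono]
      simp
    | add d e hd he =>
      have h2 : MvPolynomial.monomial (d + e) c =
          MvPolynomial.monomial d c * MvPolynomial.monomial e (1 : K) := by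
        rw [MvPolynomial.monomial_mul, mul_one]
      rw [h2, map_mul, hd, he, mono_mul, map_add, Nat.cast_add]
      congr 1
      funext p
      exact (map_mul (X.germ p) _ _).symm
    | single k m =>
      have h3 : MvPolynomial.monomial (Finsupp.single k m) c =
          algebraMap K _ c * MvPolynomial.X k ^ m := by
        rw [MvPolynomial.algebraMap_eq, MvPolynomial.C_mul_X_pow_eq_monomial]
      have h4 : ∀ m : ℕ, X.toQ (MvPolynomial.X k ^ m) =
          X.mono m fun p => X.germ p (MvPolynomial.X k ^ m) := by
        intro m
        induction m with
        | zero =>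
          simp only [pow_zero, map_one, Nat.cast_zero]
          exact X.mono_one.symm
        | succ m ih =>
          rw [pow_succ, map_mul, ih]
          have h5 : X.toQ (MvPolynomial.X k) =
              X.mono 1 fun p => X.germ p (MvPolynomial.X k) := by
            simp [toQ]
          rw [h5, mono_mul, Nat.cast_succ]
          congr 1
          funext p
          simp
      rw [h3, map_mul, h4, AlgHom.commutes, algebraMap_eq_mono, mono_mul]
      simp only [zero_add, Finsupp.degree_single]
      congr 1
      funext p
      simp
  have hsum := F.support_sum_monomial_coeff
  have key : ∀ s : Finset (Fin (n + 1) →₀ ℕ), s ⊆ F.support →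
      X.toQ (∑ d ∈ s, MvPolynomial.monomial d (F.coeff d)) =
        X.mono i fun p => X.germ p (∑ d ∈ s, MvPolynomial.monomial d (F.coeff d)) := by
    intro s
    induction s using Finset.induction_on with
    | empty =>
      intro _
      simp only [Finset.sum_empty, map_zero]
      exact (X.mono_zero _).symm
    | insert d s hd ih =>
      intro hs
      rw [Finset.sum_insert hd, map_add, ih (fun x hx => hs (Finset.mem_insert_of_mem hx)), hmon]
      have hdeg : d.degree = i := by
        have h6 := hF (MvPolynomial.mem_support_iff.1 (hs (Finset.mem_insert_self d s)))
        rw [Finsupp.degree_eq_weight_one]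
        exact h6
      rw [hdeg, mono_add]
      congr 1
      funext p
      exact (map_add (X.germ p) _ _).symm
  have := key F.support subset_rfl
  rwa [hsum] at this

lemma toQ_eq_zero {F : MvPolynomial (Fin (n + 1)) K} (hF : F ∈ X.I) : X.toQ F = 0 := by
  rw [← MvPolynomial.sum_homogeneousComponent F, map_sum]
  refine Finset.sum_eq_zero fun i _ => ?_
  rw [X.toQ_of_isHomogeneous (MvPolynomial.homogeneousComponent_isHomogeneous i F),
    ← X.mono_zero i]
  congr 1
  funext p
  have h : MvPolynomial.homogeneousComponent i F ∈ X.I :=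
    MvPolynomial.homogeneousComponent_mem_of_mem X.homogeneous hF i
  have h' : X.toAffine (MvPolynomial.homogeneousComponent i F) = 0 :=
    Ideal.Quotient.eq_zero_iff_mem.2 (Ideal.mem_sup_left h)
  change algebraMap X.affineRing (X.localRing p) (X.toAffine _) = 0
  rw [h', map_zero]

/-- The injection `ĩ : R → Q^h(R)`, `f ↦ (f_p T_pⁱ)_p` for `f ∈ R_i`, through which `R` is
identified with its image. -/
def iota : X.R →ₐ[K] X.Q := Ideal.Quotient.liftₐ X.I X.toQ fun _ h => X.toQ_eq_zero h

instance : Algebra X.R X.Q := X.iota.toRingHom.toAlgebra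

/-- `L₀ = K[x₀, x₀⁻¹] ⊆ Q^h(R)`; here `x₀ = (T_p)_p`. -/
abbrev L0 : Subalgebra K X.Q := Algebra.adjoin K {X.mono 1 1, X.mono (-1) 1}

/-! ### The conductor -/

/-- The subring `R̃ = ∏_p 𝒪_{𝕏,p}[T_p]` of `Q^h(R)`. -/
def Rtilde : Set X.Q :=
  {q | ∀ p, ∃ f : Polynomial (X.localRing p), q p = Polynomial.toLaurent f}

/-- `f ∈ Q^h(R)` lies in the conductor `𝔉_{R̃/R} = {f ∈ R̃ | f·R̃ ⊆ R}`. -/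
def conductor : Set X.Q :=
  {f | f ∈ X.Rtilde ∧ ∀ g ∈ X.Rtilde, f * g ∈ Set.range X.iota}

/-! ### Trace maps, complementary module, different, trace -/

/-- The element `g·σ : q ↦ σ(g q)` of `Hom_{L₀}(Q^h(R), L₀)`. -/
def smulHom (g : X.Q) (σ : X.Q →ₗ[X.L0] X.L0) : X.Q →ₗ[X.L0] X.L0 :=
  σ.comp (LinearMap.mulLeft X.L0 g)

/-- `σ` is a homogeneous trace map of degree zero of `Q^h(R)/L₀`: it is homogeneous of degree
zero, and it is a `Q^h(R)`-basis of `Hom_{L₀}(Q^h(R), L₀)`, i.e. `Σ : g ↦ g·σ` is bijective. -/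
def IsHomogeneousTraceMap (σ : X.Q →ₗ[X.L0] X.L0) : Prop :=
  (∀ i : ℤ, ∀ q ∈ X.Qdeg i, (σ q : X.Q) ∈ X.Qdeg i) ∧
    Function.Bijective fun g : X.Q => X.smulHom g σ

/-- The Dedekind complementary module `𝔠^σ_𝕏 ⊆ Q^h(R)`: the set of all `g = Σ⁻¹(φ ⊗ id_{L₀})` with
`φ ∈ Hom_{K[x₀]}(R, K[x₀]) = ω_R(1)`.  As `Q^h(R) = R ⊗_{K[x₀]} L₀`, the condition
`g·σ = φ ⊗ id_{L₀}` says that `g·σ` restricts to `φ` on `R`. -/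
def complementaryModule (σ : X.Q →ₗ[X.L0] X.L0) : Submodule X.R X.Q where
  carrier := {g | ∃ φ : X.R →ₗ[X.Kx0] X.Kx0,
    ∀ r : X.R, (X.smulHom g σ (X.iota r) : X.Q) = X.iota (φ r : X.R)}
  zero_mem' := ⟨0, fun r => by simp [smulHom]⟩
  add_mem' := by
    rintro g h ⟨φ, hφ⟩ ⟨ψ, hψ⟩
    refine ⟨φ + ψ, fun r => ?_⟩
    have h1 := hφ r
    have h2 := hψ r
    simp only [smulHom, LinearMap.comp_apply, LinearMap.mulLeft_apply] at h1 h2 ⊢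
    simp [add_mul, h1, h2]
  smul_mem' := by
    rintro c g ⟨φ, hφ⟩
    refine ⟨φ.comp (LinearMap.mulLeft X.Kx0 c), fun r => ?_⟩
    have h1 := hφ (c * r)
    have h2 : c • g = X.iota c * g := rfl
    simp only [smulHom, LinearMap.comp_apply, LinearMap.mulLeft_apply] at h1 ⊢
    rw [← h1, h2, map_mul X.iota, mul_comm (X.iota c) g, mul_assoc]

/-- The Dedekind different `δ^σ_𝕏 = {f ∈ Q^h(R) | f·𝔠^σ_𝕏 ⊆ R}`. -/
def different (σ : X.Q →ₗ[X.L0] X.L0) : Set X.Q :=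
  {f | ∀ g ∈ X.complementaryModule σ, f * g ∈ Set.range X.iota}

/-- The trace `tr(𝔠^σ_𝕏) = ∑_φ φ(𝔠^σ_𝕏)`, the sum being over all `φ ∈ Hom_R(𝔠^σ_𝕏, R)`. -/
def traceIdeal (σ : X.Q →ₗ[X.L0] X.L0) : Ideal X.R :=
  ⨆ φ : X.complementaryModule σ →ₗ[X.R] X.R, LinearMap.range φ

/-- `𝕏` has minimal Dedekind different: `δ^σ_𝕏 = ⨁_{i ≥ 2 r_𝕏} R_i`. -/
def MinimalDedekindDifferent (σ : X.Q →ₗ[X.L0] X.L0) : Prop :=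
  X.different σ = X.iota '' ((⨆ (i : ℕ) (_ : 2 * X.reg ≤ i), X.Rdeg i : Submodule K X.R) : Set X.R)

/-! ### Maximal `p`-subschemes, separators and the Cayley–Bacharach property -/

/-- The local ring `𝒪_{𝕐,q} = 𝒪_{𝕏,q} / 𝔟 𝒪_{𝕏,q}` of the subscheme `𝕐 ⊆ 𝕏` given by an ideal
`𝔟` of the affine coordinate ring of `𝕏` (the zero ring if `q ∉ 𝕐`). -/
abbrev subLocalRing (𝔟 : Ideal X.affineRing) (q : X.Supp) : Type u :=
  X.localRing q ⧸ 𝔟.map (algebraMap X.affineRing (X.localRing q))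

/-- The degree of the subscheme `𝕐 ⊆ 𝕏` given by `𝔟`. -/
def subDeg (𝔟 : Ideal X.affineRing) : ℕ :=
  ∑ᶠ q : X.Supp, Module.finrank K (X.subLocalRing 𝔟 q)

/-- The subscheme `𝕐 ⊆ 𝕏` given by `𝔟` is a maximal `p`-subscheme: `𝒪_{𝕐,q} = 𝒪_{𝕏,q}` for
`q ≠ p`, and `deg 𝕐 = deg 𝕏 - dim_K κ(p)`. -/
def IsMaximalSubscheme (p : X.Supp) (𝔟 : Ideal X.affineRing) : Prop :=
  (∀ q, q ≠ p → 𝔟.map (algebraMap X.affineRing (X.localRing q)) = ⊥) ∧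
    X.subDeg 𝔟 + Module.finrank K (X.residueField p) = X.deg

/-- `s` is a nonzero socle element of `𝒪_{𝕏,p}` corresponding to the maximal `p`-subscheme given
by `𝔟`: the ideal of `∏_q 𝒪_{𝕏,q}` defining the subscheme is `⟨(0,…,0,s,0,…,0)⟩`. -/
def IsSocleElementOf (p : X.Supp) (𝔟 : Ideal X.affineRing) (s : X.localRing p) : Prop :=
  s ≠ 0 ∧ (∀ b ∈ IsLocalRing.maximalIdeal (X.localRing p), b * s = 0) ∧
    𝔟.map (algebraMap X.affineRing (X.localRing p)) = Ideal.span {s}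

open Classical in
/-- `μ(a) = min {i ∈ ℕ | (0,…,0,a T_pⁱ,0,…,0) ∈ ĩ(R)}` for `a ∈ 𝒪_{𝕏,p}`. -/
def mu (p : X.Supp) (a : X.localRing p) : ℕ :=
  sInf {i : ℕ | X.mono i (Pi.single p a) ∈ Set.range X.iota}

/-- The residue classes of the `e k` form a `K`-basis of `κ(p)`. -/
def IsResidueBasis (p : X.Supp)
    (e : Fin (Module.finrank K (X.residueField p)) → X.localRing p) : Prop :=
  ∃ b : Module.Basis (Fin (Module.finrank K (X.residueField p))) K (X.residueField p),
    ∀ k, IsLocalRing.residue (X.localRing p) (e k) = b k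

/-- `m` is the maximal degree `μ_{𝕐/𝕏}` of a minimal separator of the maximal `p`-subscheme `𝕐`
given by `𝔟`: for a socle element `s` corresponding to `𝕐` and elements `e k` whose residue
classes form a `K`-basis of `κ(p)`, it is the maximum of the degrees `μ(e k · s)` of the minimal
separators.  (The value does not depend on the choice of `s` and `e`.) -/
def IsMaxSeparatorDegree (p : X.Supp) (𝔟 : Ideal X.affineRing) (m : ℕ) : Prop :=
  ∃ s : X.localRing p, X.IsSocleElementOf p 𝔟 s ∧ ∃ e, X.IsResidueBasis p e ∧
    m = Finset.univ.sup fun k => X.mu p (e k * s)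

/-- `deg_𝕏(p) = min {μ_{𝕐/𝕏} | 𝕐 a maximal p-subscheme of 𝕏}`. -/
def pointDeg (p : X.Supp) : ℕ :=
  sInf {m : ℕ | ∃ 𝔟, X.IsMaximalSubscheme p 𝔟 ∧ X.IsMaxSeparatorDegree p 𝔟 m}

/-- `𝕏` is a Cayley–Bacharach scheme: `deg_𝕏(p) ≥ r_𝕏` for every point `p` of the support. -/
def CayleyBacharach : Prop := ∀ p : X.Supp, X.reg ≤ X.pointDeg p

end ZeroDimScheme

end

/-! By the Chinese remainder theorem the ring `A = ∏_p 𝒪_{𝕏,p}` of global sections is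
`P / (I_𝕏 + ⟨X₀ - 1⟩)`, so that `Q^h(R)` is graded with all components equal to `A`, and `R` is the
subring whose component of degree `i` is the step `Fil i` of the filtration of `A` by degree, with
`Fil i = A` for `i ≥ r = r_𝕏`.  A homogeneous trace map of degree zero amounts to a linear form `τ`
on `A` for which `(a, b) ↦ τ(ab)` is nondegenerate, and for this form the component of degree `i` of
the complementary module is the orthogonal space of `Fil (-i - 1)`.  In particular the complementary
module starts in degree `-r` with `W^⊥`, where `W = Fil (r - 1)`.

Looking at socle elements, one sees that `𝕏` is a Cayley–Bacharach scheme if and only if `W`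
contains no nonzero ideal of `A`, or, dually, `W^⊥` generates the unit ideal.  Then the conductor
consists of everything in degrees `≥ r`, and it is contained in the trace because the different
always contains everything in degrees `≥ 2r`.  If moreover the trace lives in degrees `≥ r`, then a
component of degree `< 2r` of an element of the different is annihilated by `W^⊥`, hence zero.
Conversely, if `a` generates an ideal contained in `W`, then `a W^⊥ = 0` by duality, and so `a` in
degree `2r - 1` lies in the different. -/

noncomputable section

attribute [local instance] MvPolynomial.gradedAlgebra

/-! ### Homogeneous ideals and dehomogenization -/

section Dehomogenization

open MvPolynomial

variable {ι A : Type*} [CommRing A]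

lemma homogeneousComponent_succ_X_mul_s14 (k : ι) (i : ℕ) (G : MvPolynomial ι A) :
    homogeneousComponent (i + 1) (X k * G) = X k * homogeneousComponent i G := by
  classical
  ext d
  by_cases hk : k ∈ d.support
  · obtain ⟨e, rfl⟩ : ∃ e, d = Finsupp.single k 1 + e :=
      exists_add_of_le (Finsupp.single_le_iff.2 (Nat.one_le_iff_ne_zero.2 (by simpa using hk)))
    simp [coeff_homogeneousComponent, coeff_X_mul, add_comm 1]
  · simp [coeff_homogeneousComponent, coeff_X_mul', hk]

lemma homogeneousComponent_zero_X_mul (k : ι) (G : MvPolynomial ι A) :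
    homogeneousComponent 0 (X k * G) = 0 := by
  rw [homogeneousComponent_zero, ← constantCoeff_eq, map_mul, constantCoeff_X, zero_mul, map_zero]

lemma exists_X_pow_mul_mem {I : Ideal (MvPolynomial ι A)}
    (hI : I.IsHomogeneous (homogeneousSubmodule ι A)) {i : ℕ} {F : MvPolynomial ι A}
    (hF : F.IsHomogeneous i) {k : ι} (h : F ∈ I ⊔ Ideal.span {X k - 1}) :
    ∃ m : ℕ, X k ^ m * F ∈ I := by
  obtain ⟨G, hG, _, hH, hGH⟩ := Submodule.mem_sup.1 h
  obtain ⟨H, rfl⟩ := Ideal.mem_span_singleton.1 hH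
  -- Modulo `I`, the component of `H` of degree `i + m` is `-(X k) ^ m * F`;
  -- it vanishes for large `m`.
  have hcomp (j : ℕ) : homogeneousComponent j H = homogeneousComponent j G +
      homogeneousComponent j (X k * H) - if j = i then F else 0 := by
    rw [← homogeneousComponent_of_mem hF, ← hGH, sub_mul, one_mul]
    simp only [map_add, map_sub]
    ring
  have hmem (j : ℕ) :
      homogeneousComponent j H + (if i ≤ j then X k ^ (j - i) * F else 0) ∈ I := by
    have hGj := homogeneousComponent_mem_of_mem hI hG j
    induction j with
    | zero =>
      rw [hcomp, homogeneousComponent_zero_X_mul]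
      convert hGj using 1
      rcases eq_or_ne i 0 with rfl | hi <;> simp [*, eq_comm]
    | succ j ih =>
      rw [hcomp, homogeneousComponent_succ_X_mul_s14]
      convert I.add_mem hGj (I.mul_mem_left (X k)
        (ih (homogeneousComponent_mem_of_mem hI hG j))) using 1
      rcases lt_trichotomy (j + 1) i with hj | rfl | hj
      · simp [hj.ne, hj.not_ge, (Nat.lt_of_succ_lt hj).not_ge]
      · simp
      · rw [if_neg hj.ne', if_pos hj.le, if_pos (Nat.le_of_lt_succ hj),
          Nat.succ_sub (Nat.le_of_lt_succ hj), pow_succ]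
        ring
  refine ⟨H.totalDegree + 1, ?_⟩
  have hzero : homogeneousComponent (i + (H.totalDegree + 1)) H = 0 :=
    homogeneousComponent_eq_zero _ _ (by omega)
  simpa [hzero] using hmem (i + (H.totalDegree + 1))

end Dehomogenization

/-! ### Frobenius forms -/

section FrobeniusForm

variable {K A : Type*} [Field K] [CommRing A] [Algebra K A]

/-- The symmetric bilinear form `(a, b) ↦ τ (a * b)` of a linear form `τ` on a `K`-algebra.  When
it is nondegenerate, `A` is a Frobenius algebra. -/
def mulForm (τ : A →ₗ[K] K) : LinearMap.BilinForm K A := (LinearMap.mul K A).compr₂ τ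

@[simp] lemma mulForm_apply (τ : A →ₗ[K] K) (a b : A) : mulForm τ a b = τ (a * b) := rfl

lemma mulForm_isRefl (τ : A →ₗ[K] K) : (mulForm τ).IsRefl := fun a b h => by
  rwa [mulForm_apply, mul_comm, ← mulForm_apply]

/-- The subspace `W` of the algebra `A` contains no nonzero ideal of `A`. -/
def ContainsNoIdeal (W : Submodule K A) : Prop := ∀ a : A, (∀ b, b * a ∈ W) → a = 0

variable {τ : A →ₗ[K] K}

lemma mul_eq_zero_of_forall_mul_mem (hτ : (mulForm τ).Nondegenerate) {W : Submodule K A} {a g : A}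
    (hg : g ∈ (mulForm τ).orthogonal W) (ha : ∀ b, b * a ∈ W) : g * a = 0 := by
  refine hτ.1 _ fun b => ?_
  rw [mulForm_apply, show g * a * b = b * a * g by ring]
  exact hg _ (ha b)

variable [Module.Finite K A]

lemma orthogonal_orthogonal_mulForm (hτ : (mulForm τ).Nondegenerate) (W : Submodule K A) :
    (mulForm τ).orthogonal ((mulForm τ).orthogonal W) = W :=
  LinearMap.BilinForm.orthogonal_orthogonal hτ (mulForm_isRefl τ) W

lemma forall_mul_mem_of_forall_mul_eq_zero (hτ : (mulForm τ).Nondegenerate) {W : Submodule K A}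
    {a : A} (ha : ∀ g ∈ (mulForm τ).orthogonal W, g * a = 0) (b : A) : b * a ∈ W := by
  rw [← orthogonal_orthogonal_mulForm hτ W]
  intro g hg
  rw [mulForm_apply, mul_left_comm, ha g hg, mul_zero, map_zero]

lemma ContainsNoIdeal.span_orthogonal_eq_top (hτ : (mulForm τ).Nondegenerate) {W : Submodule K A}
    (hW : ContainsNoIdeal W) :
    Ideal.span ((mulForm τ).orthogonal W : Set A) = ⊤ := by
  set J := (Ideal.span ((mulForm τ).orthogonal W : Set A)).restrictScalars K with hJ
  have hperp : (mulForm τ).orthogonal J = ⊥ := by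
    refine (Submodule.eq_bot_iff _).2 fun a ha => hW a fun b => ?_
    refine forall_mul_mem_of_forall_mul_eq_zero hτ (fun g hg => hτ.1 _ fun c => ?_) b
    rw [mulForm_apply, mul_right_comm]
    exact ha _ (Ideal.mul_mem_right c _ (Ideal.subset_span hg))
  rw [← Submodule.restrictScalars_eq_top_iff K, ← hJ, ← orthogonal_orthogonal_mulForm hτ J, hperp,
    LinearMap.BilinForm.orthogonal_bot]

end FrobeniusForm

/-! ### Traces of fractional ideals -/

section Trace

variable {R Q : Type*} [CommRing R] [CommRing Q] [Algebra R Q]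

lemma algebraMap_apply_eq_mul {C : Submodule R Q} (h1 : 1 ∈ C)
    (hC : ∀ c ∈ C, ∃ x : R, algebraMap R Q x ∈ nonZeroDivisors Q ∧ x • c ∈ (1 : Submodule R Q))
    (φ : C →ₗ[R] R) (c : C) : algebraMap R Q (φ c) = algebraMap R Q (φ ⟨1, h1⟩) * c := by
  obtain ⟨x, hx, hxc⟩ := hC c c.2
  obtain ⟨y, hy⟩ := Submodule.mem_one.1 hxc
  have hy1 : x • c = y • (⟨1, h1⟩ : C) := Subtype.ext (by simp [← hy, Algebra.smul_def])
  have hφ : x * φ c = y * φ ⟨1, h1⟩ := by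
    rw [← smul_eq_mul, ← map_smul, hy1, map_smul, smul_eq_mul]
  refine (mul_cancel_left_mem_nonZeroDivisors hx).1 ?_
  rw [← map_mul, hφ, map_mul, hy, Algebra.smul_def]
  ring

lemma map_iSup_range_eq_one_div_mul [FaithfulSMul R Q] {C : Submodule R Q} (h1 : 1 ∈ C)
    (hC : ∀ c ∈ C, ∃ x : R, algebraMap R Q x ∈ nonZeroDivisors Q ∧ x • c ∈ (1 : Submodule R Q)) :
    (⨆ φ : C →ₗ[R] R, LinearMap.range φ).map (Algebra.linearMap R Q) = 1 / C * C := by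
  rw [Submodule.map_iSup]
  refine le_antisymm (iSup_le fun φ => ?_) (Submodule.mul_le.2 fun f hf c hc => ?_)
  · rintro _ ⟨_, ⟨c, rfl⟩, rfl⟩
    rw [Algebra.linearMap_apply, algebraMap_apply_eq_mul h1 hC]
    refine Submodule.mul_mem_mul (Submodule.mem_div_iff_forall_mul_mem.2 fun d hd => ?_) c.2
    exact Submodule.mem_one.2 ⟨_, algebraMap_apply_eq_mul h1 hC φ ⟨d, hd⟩⟩
  · have hfC : ∀ d : C, f * d ∈ LinearMap.range (Algebra.linearMap R Q) := fun d => by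
      rw [← Submodule.one_eq_range]
      exact Submodule.mem_div_iff_forall_mul_mem.1 hf d d.2
    let e := LinearEquiv.ofInjective (Algebra.linearMap R Q) (FaithfulSMul.algebraMap_injective R Q)
    let φ : C →ₗ[R] R := e.symm.toLinearMap ∘ₗ
      ((LinearMap.mulLeft R f).comp C.subtype).codRestrict _ hfC
    refine Submodule.mem_iSup_of_mem φ ⟨φ ⟨c, hc⟩, ⟨_, rfl⟩, ?_⟩
    exact congrArg Subtype.val (e.apply_symm_apply ⟨f * c, hfC ⟨c, hc⟩⟩)

end Trace

/-! ### Socles of local rings -/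

section Socle

open IsLocalRing

/-- `s` is a nonzero element of the socle of the local ring `A`. -/
def IsSocleElement {A : Type*} [CommRing A] [IsLocalRing A] (s : A) : Prop :=
  s ≠ 0 ∧ ∀ b ∈ maximalIdeal A, b * s = 0

variable {A : Type*} [CommRing A] [IsLocalRing A]

lemma exists_isSocleElement_mul [IsArtinianRing A] {a : A} (ha : a ≠ 0) :
    ∃ c, IsSocleElement (c * a) := by
  obtain ⟨S, hS, hSa⟩ := (eq_bot_or_exists_atom_le (Ideal.span {a})).resolve_left
    (by rwa [Ideal.span_singleton_eq_bot])
  obtain ⟨s, hsS, hs0⟩ := Submodule.exists_mem_ne_zero_of_ne_bot hS.1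
  obtain ⟨c, rfl⟩ := Ideal.mem_span_singleton'.1 (hSa hsS)
  refine ⟨c, hs0, fun b hb => ?_⟩
  by_contra hne
  have hspan : Ideal.span {b * (c * a)} = S :=
    (hS.le_iff.1 ((Ideal.span_singleton_le_iff_mem S).2 (S.mul_mem_left b hsS))).resolve_left
      (by rwa [Ideal.span_singleton_eq_bot])
  obtain ⟨d, hd⟩ := Ideal.mem_span_singleton'.1 (hspan ▸ hsS)
  have hunit : IsUnit (1 - d * b) :=
    isUnit_one_sub_self_of_mem_nonunits _ ((maximalIdeal A).mul_mem_left d hb)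
  exact hs0 (hunit.mul_right_eq_zero.1 (by linear_combination -hd))

namespace IsSocleElement

variable {s : A}

lemma mul_eq_zero_iff (hs : IsSocleElement s) (y : A) : y * s = 0 ↔ residue A y = 0 := by
  rw [residue_eq_zero_iff]
  refine ⟨fun hy => (mem_maximalIdeal y).2 fun hu => hs.1 ?_, hs.2 y⟩
  exact hu.mul_right_eq_zero.1 hy

variable {K : Type*} [Field K] [Algebra K A]

lemma mul_mem_span_range (hs : IsSocleElement s) {ι : Type*} {e : ι → A}
    (he : ⊤ ≤ Submodule.span K (Set.range fun k => residue A (e k))) (y : A) :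
    y * s ∈ Submodule.span K (Set.range fun k => e k * s) := by
  let res : A →ₗ[K] ResidueField A := (IsScalarTower.toAlgHom K A (ResidueField A)).toLinearMap
  have hy : res y ∈ (Submodule.span K (Set.range e)).map res := by
    rw [Submodule.map_span, ← Set.range_comp]
    exact he Submodule.mem_top
  obtain ⟨z, hz, hzy⟩ := hy
  have hyz : y * s = z * s := by
    rw [← sub_eq_zero, ← sub_mul, hs.mul_eq_zero_iff, map_sub, sub_eq_zero]
    exact hzy.symm
  rw [hyz]
  have hmap := Submodule.mem_map_of_mem (f := LinearMap.mulRight K s) hz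
  rwa [Submodule.map_span, ← Set.range_comp] at hmap

lemma finrank_quotient_add_finrank_residueField [Module.Finite K A] (hs : IsSocleElement s) :
    Module.finrank K (A ⧸ Ideal.span {s}) + Module.finrank K (ResidueField A) =
      Module.finrank K A := by
  let res : A →ₗ[K] ResidueField A := (IsScalarTower.toAlgHom K A (ResidueField A)).toLinearMap
  let mk : A →ₗ[K] A ⧸ Ideal.span {s} := (Ideal.Quotient.mkₐ K (Ideal.span {s})).toLinearMap
  let mulS : A →ₗ[K] A := LinearMap.mulRight K s
  have hker : LinearMap.ker res = LinearMap.ker mulS :=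
    Submodule.ext fun y => (hs.mul_eq_zero_iff y).symm
  have hrange : LinearMap.ker mk = LinearMap.range mulS :=
    Submodule.ext fun y => Ideal.Quotient.eq_zero_iff_mem.trans Ideal.mem_span_singleton'
  have hres := res.finrank_range_add_finrank_ker
  have hmk := mk.finrank_range_add_finrank_ker
  have hmulS := mulS.finrank_range_add_finrank_ker
  rw [LinearMap.range_eq_top.2 residue_surjective, finrank_top, hker] at hres
  rw [LinearMap.range_eq_top.2 Ideal.Quotient.mk_surjective, finrank_top, hrange] at hmk
  omega

end IsSocleElement

lemma containsNoIdeal_iff_forall_not_isSocleElement {K ι : Type*} [Field K] [DecidableEq ι]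
    {A : ι → Type*} [∀ i, CommRing (A i)] [∀ i, Algebra K (A i)] [∀ i, IsLocalRing (A i)]
    [∀ i, IsArtinianRing (A i)] {W : Submodule K (∀ i, A i)} :
    ContainsNoIdeal W ↔ ∀ i, ∀ s : A i, (∀ y, Pi.single i (y * s) ∈ W) → ¬ IsSocleElement s := by
  constructor
  · intro hW i s hsW hs
    refine hs.1 (Pi.single_eq_zero_iff.1 (hW (Pi.single i s) fun b => ?_))
    rw [← Pi.single_mul_right]
    exact hsW _
  · intro h a haW
    funext i
    by_contra hai
    obtain ⟨c, hc⟩ := exists_isSocleElement_mul hai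
    refine h i _ (fun y => ?_) hc
    rw [← mul_assoc, Pi.single_mul_left]
    exact haW _

end Socle

/-! ### Laurent polynomials -/

lemma exists_eq_toLaurent_iff {A : Type*} [CommRing A] {f : A[T;T⁻¹]} :
    (∃ g : Polynomial A, f = Polynomial.toLaurent g) ↔ ∀ i < 0, f.coeff i = 0 := by
  constructor
  · rintro ⟨g, rfl⟩ i hi
    rw [← Finsupp.notMem_support_iff, LaurentPolynomial.support_coeff_toLaurent]
    simp only [Finset.mem_map, not_exists, not_and]
    rintro k - rfl
    exact absurd hi (by simp)
  · intro h
    refine ⟨LaurentPolynomial.trunc f, AddMonoidAlgebra.coeff_injective ?_⟩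
    refine (Finsupp.mapDomain_comapDomain _ Nat.cast_injective _ fun i hi => ?_).symm
    exact ⟨i.toNat,
      Int.toNat_of_nonneg (not_lt.1 fun hi0 => Finsupp.mem_support_iff.1 hi (h i hi0))⟩

namespace ZeroDimScheme

variable {K : Type u} [Field K] {n : ℕ} (X : ZeroDimScheme K n)

/-! ### The affine coordinate ring -/

section AffineRing

open MvPolynomial (homogeneousComponent homogeneousComponent_isHomogeneous homogeneousSubmodule
  idealOfVars isHomogeneous_X)

lemma exists_pow_idealOfVars_le :
    ∃ N, idealOfVars (Fin (n + 1)) K ^ N ≤ X.I ⊔ Ideal.span {MvPolynomial.X 0} := by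
  refine Ideal.exists_pow_le_of_le_radical_of_fg ?_ (MvPolynomial.idealOfVars_fg _ _)
  rw [idealOfVars, Ideal.span_le, Ideal.radical_eq_sInf]
  rintro _ ⟨k, rfl⟩
  simp only [SetLike.mem_coe, Ideal.mem_sInf, Set.mem_ofPred_eq]
  rintro 𝔭 ⟨hle, hp⟩
  have hX0 : (MvPolynomial.X 0 : MvPolynomial (Fin (n + 1)) K) ∈ 𝔭 :=
    hle (Ideal.mem_sup_right (Ideal.mem_span_singleton_self _))
  -- `avoids` only concerns homogeneous primes, so pass to the homogeneous core of `𝔭`.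
  refine Ideal.toIdeal_homogeneousCore_le (homogeneousSubmodule (Fin (n + 1)) K) 𝔭 <|
    X.avoids _ hp.homogeneousCore (HomogeneousIdeal.isHomogeneous _) ?_ ?_ k
  · rw [← X.homogeneous.toIdeal_homogeneousCore_eq_self]
    exact Ideal.homogeneousCore_mono _ (le_sup_left.trans hle)
  · exact Ideal.mem_homogeneousCore_of_homogeneous_of_mem ⟨1, isHomogeneous_X K 0⟩ hX0

variable {F : MvPolynomial (Fin (n + 1)) K}

lemma mem_of_pow_idealOfVars_mul_mem (N : ℕ)
    (h : ∀ G ∈ idealOfVars (Fin (n + 1)) K ^ N, G * F ∈ X.I) : F ∈ X.I := by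
  induction N generalizing F with
  | zero => simpa using h 1 (by simp)
  | succ N ih =>
    refine X.saturated F fun k => ih fun G hG => ?_
    rw [← mul_assoc]
    exact h _ (pow_succ (idealOfVars (Fin (n + 1)) K) N ▸
      Ideal.mul_mem_mul hG (Ideal.subset_span ⟨k, rfl⟩))

lemma mem_of_X_zero_mul_mem (h : MvPolynomial.X 0 * F ∈ X.I) : F ∈ X.I := by
  obtain ⟨N, hN⟩ := X.exists_pow_idealOfVars_le
  refine X.mem_of_pow_idealOfVars_mul_mem N fun G hG => ?_
  obtain ⟨a, ha, b, hb, rfl⟩ := Submodule.mem_sup.1 (hN hG)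
  obtain ⟨c, rfl⟩ := Ideal.mem_span_singleton.1 hb
  rw [add_mul, mul_right_comm]
  exact X.I.add_mem (X.I.mul_mem_right _ ha) (X.I.mul_mem_right _ h)

lemma mem_of_X_zero_pow_mul_mem {m : ℕ} (h : MvPolynomial.X 0 ^ m * F ∈ X.I) : F ∈ X.I := by
  induction m with
  | zero => simpa using h
  | succ m ih =>
    rw [pow_succ', mul_assoc] at h
    exact ih (X.mem_of_X_zero_mul_mem h)

lemma toAffine_surjective : Function.Surjective X.toAffine := Ideal.Quotient.mk_surjective

lemma toAffine_eq_zero (hF : F ∈ X.I) : X.toAffine F = 0 :=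
  Ideal.Quotient.eq_zero_iff_mem.2 (Ideal.mem_sup_left hF)

lemma toAffine_X_zero : X.toAffine (MvPolynomial.X 0) = 1 :=
  Ideal.Quotient.eq.2 (Ideal.mem_sup_right (Ideal.mem_span_singleton_self _))

lemma mem_of_toAffine_eq_zero {i : ℕ} (hF : F.IsHomogeneous i) (h : X.toAffine F = 0) :
    F ∈ X.I := by
  obtain ⟨m, hm⟩ := exists_X_pow_mul_mem X.homogeneous hF (Ideal.Quotient.eq_zero_iff_mem.1 h)
  exact X.mem_of_X_zero_pow_mul_mem hm

instance : Nontrivial X.affineRing := by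
  by_contra htriv
  rw [not_nontrivial_iff_subsingleton] at htriv
  have h1 : (1 : MvPolynomial (Fin (n + 1)) K) ∈ X.I :=
    X.mem_of_toAffine_eq_zero (MvPolynomial.isHomogeneous_one _ _) (Subsingleton.elim _ _)
  have : Subsingleton X.R := Ideal.Quotient.subsingleton_iff.2 (X.I.eq_top_iff_one.2 h1)
  exact absurd X.dim_eq_zero (by simp [ringKrullDim_eq_bot_of_subsingleton])

/-- The space of dehomogenizations of the forms of degree `i`.  These form an ascending filtration
of the affine coordinate ring, as `x₀` dehomogenizes to `1`. -/
def affineFil (i : ℕ) : Submodule K X.affineRing :=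
  (homogeneousSubmodule (Fin (n + 1)) K i).map X.toAffine.toLinearMap

lemma affineFil_mono : Monotone X.affineFil := by
  refine monotone_nat_of_le_succ fun i => ?_
  rintro _ ⟨F, hF, rfl⟩
  exact ⟨MvPolynomial.X 0 * F, add_comm 1 i ▸ (isHomogeneous_X K (0 : Fin (n + 1))).mul hF,
    by simp [toAffine_X_zero]⟩

lemma affineFil_succ_le {N i : ℕ}
    (hN : idealOfVars (Fin (n + 1)) K ^ N ≤ X.I ⊔ Ideal.span {MvPolynomial.X 0})
    (hi : N ≤ i + 1) : X.affineFil (i + 1) ≤ X.affineFil i := by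
  rintro _ ⟨F, hF, rfl⟩
  have hFN : F ∈ idealOfVars (Fin (n + 1)) K ^ N :=
    (MvPolynomial.mem_pow_idealOfVars_iff N F).2 fun d hd =>
      hi.trans (Finsupp.degree_eq_weight_one (R := ℕ) ▸ hF (MvPolynomial.mem_support_iff.1 hd)).ge
  obtain ⟨a, ha, b, hb, hab⟩ := Submodule.mem_sup.1 (hN hFN)
  obtain ⟨c, rfl⟩ := Ideal.mem_span_singleton.1 hb
  refine ⟨homogeneousComponent i c, homogeneousComponent_isHomogeneous i c, ?_⟩
  have hFac : F = homogeneousComponent (i + 1) a + MvPolynomial.X 0 * homogeneousComponent i c := by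
    rw [← homogeneousComponent_succ_X_mul_s14, ← map_add, hab,
      MvPolynomial.homogeneousComponent_eq_self hF]
  have ha0 := X.toAffine_eq_zero
    (MvPolynomial.homogeneousComponent_mem_of_mem X.homogeneous ha (i + 1))
  simp [hFac, ha0, toAffine_X_zero]

lemma exists_affineFil_eq_top : ∃ N, X.affineFil N = ⊤ := by
  obtain ⟨N, hN⟩ := X.exists_pow_idealOfVars_le
  have hstable (k : ℕ) : X.affineFil (N + k) ≤ X.affineFil N := by
    induction k with
    | zero => exact le_rfl
    | succ k ih => exact (X.affineFil_succ_le hN (Nat.le_add_right N (k + 1))).trans ih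
  refine ⟨N, eq_top_iff.2 fun a _ => ?_⟩
  obtain ⟨F, rfl⟩ := X.toAffine_surjective a
  rw [← MvPolynomial.sum_homogeneousComponent F, map_sum]
  exact Submodule.sum_mem _ fun j _ => hstable j <| X.affineFil_mono (Nat.le_add_left j N)
    ⟨_, homogeneousComponent_isHomogeneous j F, rfl⟩

instance : Module.Finite K X.affineRing := by
  obtain ⟨N, hN⟩ := X.exists_affineFil_eq_top
  exact ⟨hN ▸ (MvPolynomial.homogeneousSubmodule_fg _ _ N).map _⟩

instance : IsArtinianRing X.affineRing := IsArtinianRing.of_finite K _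

/-- The ring of global sections of `𝕏` as the product `∏_p 𝒪_{𝕏,p}`, in which the coefficients of
the elements of `Q^h(R)` live. -/
abbrev globalSections : Type u := ∀ p : X.Supp, X.localRing p

/-- The Chinese remainder isomorphism from the affine coordinate ring to the product of the local
rings. -/
def localEquiv : X.affineRing ≃ₐ[K] X.globalSections :=
  (MaximalSpectrum.toPiLocalizationEquiv X.affineRing).restrictScalars K

lemma localEquiv_apply (a : X.affineRing) (p : X.Supp) :
    X.localEquiv a p = algebraMap X.affineRing (X.localRing p) a := rfl

lemma localEquiv_toAffine : X.localEquiv (X.toAffine F) = fun p => X.germ p F := rfl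

instance : Nontrivial X.globalSections := X.localEquiv.injective.nontrivial

instance : Module.Finite K X.globalSections :=
  Module.Finite.equiv X.localEquiv.toLinearEquiv

instance (p : X.Supp) : Module.Finite K (X.localRing p) :=
  Module.Finite.of_surjective (LinearMap.proj (R := K) (φ := X.localRing) p)
    (Function.surjective_eval p)

lemma deg_eq_finrank : X.deg = Module.finrank K X.globalSections := by
  have := Fintype.ofFinite X.Supp
  rw [deg, finsum_eq_sum_of_fintype, Module.finrank_pi_fintype]

end AffineRing

/-! ### The grading of the ring of quotients -/

section Grading

variable {X} in
/-- The coefficient `(q_{p,i})_p` of `(T_pⁱ)_p` in `q ∈ Q^h(R)`. -/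
def coeff (i : ℤ) : X.Q →ₗ[K] X.globalSections where
  toFun q p := (q p).coeff i
  map_add' _ _ := rfl
  map_smul' _ _ := rfl

lemma coeff_apply (i : ℤ) (q : X.Q) (p : X.Supp) : coeff i q p = (q p).coeff i := rfl

/-- `a ↦ (a_p T_pⁱ)_p` as a `K`-linear map. -/
def monoₗ (i : ℤ) : X.globalSections →ₗ[K] X.Q where
  toFun := X.mono i
  map_add' a b := (X.mono_add i a b).symm
  map_smul' c a := by
    rw [RingHom.id_apply, Algebra.smul_def, Algebra.smul_def, algebraMap_eq_mono, mono_mul,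
      zero_add]
    rfl

@[simp] lemma monoₗ_apply (i : ℤ) (a : X.globalSections) : X.monoₗ i a = X.mono i a := rfl

lemma mono_apply (i : ℤ) (a : X.globalSections) (p : X.Supp) :
    X.mono i a p = AddMonoidAlgebra.single i (a p) :=
  (LaurentPolynomial.single_eq_C_mul_T (a p) i).symm

lemma coeff_mono (i j : ℤ) (a : X.globalSections) :
    coeff j (X.mono i a) = if i = j then a else 0 := by
  funext p
  rw [coeff_apply, mono_apply, AddMonoidAlgebra.coeff_single, Finsupp.single_apply]
  split_ifs <;> rfl

@[simp] lemma coeff_mono_self (i : ℤ) (a : X.globalSections) : coeff i (X.mono i a) = a := by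
  rw [coeff_mono, if_pos rfl]

lemma coeff_mono_mul (i j : ℤ) (a : X.globalSections) (q : X.Q) :
    coeff j (X.mono i a * q) = a * coeff (j - i) q := by
  funext p
  have hp : (X.mono i a * q) p = AddMonoidAlgebra.single i (a p) * q p :=
    congrArg (· * q p) (X.mono_apply i a p)
  rw [coeff_apply, hp, AddMonoidAlgebra.coeff_single_mul_eq_mul_coeff (j - i)
    (fun _ _ => eq_sub_iff_add_eq'.symm)]
  rfl

lemma mono_injective (i : ℤ) : Function.Injective (X.mono i) :=
  Function.LeftInverse.injective (X.coeff_mono_self i)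

variable {X}

lemma ext_coeff {q q' : X.Q} (h : ∀ i, coeff i q = coeff i q') : q = q' :=
  funext fun p => LaurentPolynomial.ext fun i => congrFun (h i) p

lemma exists_eq_sum_mono (q : X.Q) : ∃ s : Finset ℤ, q = ∑ i ∈ s, X.mono i (coeff i q) := by
  classical
  have := Fintype.ofFinite X.Supp
  refine ⟨Finset.univ.biUnion fun p => (q p).coeff.support, ext_coeff fun j => ?_⟩
  simp only [map_sum, coeff_mono, Finset.sum_ite_eq']
  split_ifs with hj
  · rfl
  · funext p
    by_contra hp
    exact hj (Finset.mem_biUnion.2 ⟨p, Finset.mem_univ p, Finsupp.mem_support_iff.2 hp⟩)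

lemma mem_of_forall_mono_coeff_mem {S : Submodule K X.Q} {q : X.Q}
    (h : ∀ i, X.mono i (coeff i q) ∈ S) : q ∈ S := by
  obtain ⟨s, hs⟩ := exists_eq_sum_mono q
  rw [hs]
  exact S.sum_mem fun i _ => h i

lemma linearMap_ext_mono {M : Type*} [AddCommMonoid M] [Module K M] {f g : X.Q →ₗ[K] M}
    (h : ∀ i a, f (X.mono i a) = g (X.mono i a)) : f = g :=
  LinearMap.ext fun _ => mem_of_forall_mono_coeff_mem (S := LinearMap.eqLocus f g) fun i => h i _

variable (X) in
/-- The elements of `Q^h(R)` all of whose homogeneous components have degree at least `m`. -/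
def Qge (m : ℤ) : Submodule K X.Q := ⨅ i < m, LinearMap.ker (coeff i)

lemma mem_Qge {m : ℤ} {q : X.Q} : q ∈ X.Qge m ↔ ∀ i < m, coeff i q = 0 := by
  simp [Qge, Submodule.mem_iInf]

lemma mono_mem_Qge {m i : ℤ} (hi : m ≤ i) (a : X.globalSections) : X.mono i a ∈ X.Qge m :=
  mem_Qge.2 fun j hj => by rw [coeff_mono, if_neg (by omega)]

lemma mul_mem_Qge {a b : ℤ} {q q' : X.Q} (hq : q ∈ X.Qge a) (hq' : q' ∈ X.Qge b) :
    q * q' ∈ X.Qge (a + b) := by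
  suffices q ∈ (X.Qge (a + b)).comap (LinearMap.mulRight K q') from this
  refine mem_of_forall_mono_coeff_mem fun i => mem_Qge.2 fun j hj => ?_
  rw [LinearMap.mulRight_apply, coeff_mono_mul]
  rcases lt_or_ge i a with hi | hi
  · rw [mem_Qge.1 hq i hi, zero_mul]
  · rw [mem_Qge.1 hq' (j - i) (by omega), mul_zero]

lemma mem_Rtilde_iff {q : X.Q} : q ∈ X.Rtilde ↔ q ∈ X.Qge 0 := by
  rw [mem_Qge]
  exact (forall_congr' fun p => exists_eq_toLaurent_iff).trans
    ⟨fun h i hi => funext fun p => h p i hi, fun h p i hi => congrFun (h i hi) p⟩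

variable (X) in
lemma toSubmodule_L0 :
    Subalgebra.toSubmodule X.L0 = Submodule.span K (Set.range fun i : ℤ => X.mono i 1) := by
  refine le_antisymm ?_ (Submodule.span_le.2 ?_)
  · rw [Algebra.adjoin_eq_span]
    refine Submodule.span_mono fun y hy => ?_
    induction hy using Submonoid.closure_induction with
    | mem y hy =>
      rcases hy with rfl | rfl
      exacts [⟨1, rfl⟩, ⟨-1, rfl⟩]
    | one => exact ⟨0, X.mono_one⟩
    | mul y z _ _ hy hz =>
      obtain ⟨j, rfl⟩ := hy
      obtain ⟨k, rfl⟩ := hz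
      exact ⟨j + k, by simp only [mono_mul, mul_one]⟩
  · rintro _ ⟨i, rfl⟩
    change X.mono i 1 ∈ X.L0
    induction i using Int.induction_on with
    | zero => exact X.mono_one ▸ X.L0.one_mem
    | succ i ih =>
      simpa [mono_mul] using X.L0.mul_mem ih (Algebra.subset_adjoin (Set.mem_insert _ _))
    | pred i ih =>
      simpa [mono_mul, sub_eq_add_neg] using
        X.L0.mul_mem ih (Algebra.subset_adjoin (Set.mem_insert_of_mem _ rfl))

variable (X) in
lemma mono_one_mem_L0 (i : ℤ) : X.mono i 1 ∈ X.L0 := by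
  rw [← Subalgebra.mem_toSubmodule, toSubmodule_L0]
  exact Submodule.subset_span ⟨i, rfl⟩

lemma coeff_mem_range_algebraMap {x : X.Q} (hx : x ∈ X.L0) (i : ℤ) :
    coeff i x ∈ LinearMap.range (Algebra.linearMap K X.globalSections) := by
  rw [← Subalgebra.mem_toSubmodule, toSubmodule_L0] at hx
  refine (Submodule.span_le
    (p := (LinearMap.range (Algebra.linearMap K X.globalSections)).comap (coeff i))).2 ?_ hx
  rintro _ ⟨j, rfl⟩
  rw [SetLike.mem_coe, Submodule.mem_comap, coeff_mono]
  split_ifs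
  · exact ⟨1, map_one (algebraMap K X.globalSections)⟩
  · exact Submodule.zero_mem _

end Grading

/-! ### The coordinate ring inside the ring of quotients -/

section CoordinateRing

open MvPolynomial (homogeneousComponent homogeneousComponent_isHomogeneous)

/-- The space of all `a` with `(a_p T_pⁱ)_p ∈ R`.  Under the Chinese remainder isomorphism this is
the step `affineFil i` of the filtration by degree; it is zero for `i < 0`. -/
def Fil (i : ℤ) : Submodule K X.globalSections :=
  (LinearMap.range X.iota.toLinearMap).comap (X.monoₗ i)

variable {X}

lemma mem_Fil {i : ℤ} {a : X.globalSections} : a ∈ X.Fil i ↔ X.mono i a ∈ Set.range X.iota :=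
  Iff.rfl

lemma coeff_toQ (i : ℤ) (F : MvPolynomial (Fin (n + 1)) K) :
    coeff i (X.toQ F) = ∑ j ∈ Finset.range (F.totalDegree + 1),
      if (j : ℤ) = i then X.localEquiv (X.toAffine (homogeneousComponent j F)) else 0 := by
  conv_lhs => rw [← MvPolynomial.sum_homogeneousComponent F, map_sum, map_sum]
  refine Finset.sum_congr rfl fun j _ => ?_
  rw [X.toQ_of_isHomogeneous (homogeneousComponent_isHomogeneous j F), coeff_mono,
    localEquiv_toAffine]

lemma coeff_toQ_natCast (i : ℕ) (F : MvPolynomial (Fin (n + 1)) K) :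
    coeff i (X.toQ F) = X.localEquiv (X.toAffine (homogeneousComponent i F)) := by
  simp only [coeff_toQ, Nat.cast_inj, Finset.sum_ite_eq', Finset.mem_range]
  split_ifs with hi
  · rfl
  · rw [MvPolynomial.homogeneousComponent_eq_zero _ _ (by omega), map_zero, map_zero]

lemma iota_mem_Qge_zero (f : X.R) : X.iota f ∈ X.Qge 0 := by
  obtain ⟨F, rfl⟩ := Ideal.Quotient.mk_surjective f
  refine mem_Qge.2 fun i hi => (coeff_toQ i F).trans (Finset.sum_eq_zero fun j _ => ?_)
  rw [if_neg (by omega)]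

lemma coeff_iota_mem (i : ℤ) (f : X.R) : coeff i (X.iota f) ∈ X.Fil i := by
  obtain ⟨F, rfl⟩ := Ideal.Quotient.mk_surjective f
  refine (coeff_toQ i F).symm ▸ Submodule.sum_mem _ fun j _ => ?_
  split_ifs with hj
  · exact ⟨Ideal.Quotient.mk X.I (homogeneousComponent j F),
      hj ▸ X.toQ_of_isHomogeneous (homogeneousComponent_isHomogeneous j F)⟩
  · exact Submodule.zero_mem _

lemma mem_range_iota_iff {q : X.Q} : q ∈ Set.range X.iota ↔ ∀ i, coeff i q ∈ X.Fil i := by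
  refine ⟨?_, fun h => mem_of_forall_mono_coeff_mem (S := LinearMap.range X.iota.toLinearMap) h⟩
  rintro ⟨f, rfl⟩ i
  exact coeff_iota_mem i f

variable (X)

lemma iota_injective : Function.Injective X.iota := by
  refine (injective_iff_map_eq_zero X.iota).2 fun f hf => ?_
  obtain ⟨F, rfl⟩ := Ideal.Quotient.mk_surjective f
  refine Ideal.Quotient.eq_zero_iff_mem.2
    ((MvPolynomial.mem_iff_homogeneousComponent_mem X.homogeneous F).2 fun i => ?_)
  refine X.mem_of_toAffine_eq_zero (homogeneousComponent_isHomogeneous i F)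
    (X.localEquiv.injective ?_)
  rw [← coeff_toQ_natCast, map_zero]
  exact (congrArg (coeff i) hf).trans (map_zero _)

instance : FaithfulSMul X.R X.Q := (faithfulSMul_iff_algebraMap_injective _ _).2 X.iota_injective

lemma iota_x0_pow (k : ℕ) : X.iota (X.x0 ^ k) = X.mono k 1 := by
  refine (X.toQ_of_isHomogeneous (MvPolynomial.isHomogeneous_X_pow (R := K) 0 k)).trans ?_
  rw [← localEquiv_toAffine, map_pow, toAffine_X_zero, one_pow, map_one]

lemma Fil_of_neg {i : ℤ} (hi : i < 0) : X.Fil i = ⊥ := by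
  refine (Submodule.eq_bot_iff _).2 fun a ha => ?_
  obtain ⟨f, hf⟩ := mem_Fil.1 ha
  rw [← X.coeff_mono_self i a, ← hf, mem_Qge.1 (iota_mem_Qge_zero f) i hi]

lemma Fil_natCast (i : ℕ) : X.Fil i = (X.affineFil i).map X.localEquiv.toLinearMap := by
  refine le_antisymm ?_ ?_
  · rintro a ⟨f, hf⟩
    obtain ⟨F, rfl⟩ := Ideal.Quotient.mk_surjective f
    refine ⟨_, ⟨_, homogeneousComponent_isHomogeneous i F, rfl⟩, ?_⟩
    rw [← X.coeff_mono_self i a, ← monoₗ_apply, ← hf]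
    exact (coeff_toQ_natCast i F).symm
  · rintro _ ⟨_, ⟨F, hF, rfl⟩, rfl⟩
    exact ⟨Ideal.Quotient.mk X.I F, X.toQ_of_isHomogeneous hF⟩

lemma Fil_mono : Monotone X.Fil := by
  intro i j hij
  rcases lt_or_ge i 0 with hi | hi
  · exact X.Fil_of_neg hi ▸ bot_le
  · lift i to ℕ using hi
    lift j to ℕ using (by omega)
    rw [Fil_natCast, Fil_natCast]
    exact Submodule.map_mono (X.affineFil_mono (by exact_mod_cast hij))

lemma map_iota_Rdeg (i : ℕ) :
    (X.Rdeg i).map X.iota.toLinearMap = (X.Fil i).map (X.monoₗ i) := by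
  rw [Fil_natCast]
  ext q
  constructor
  · rintro ⟨_, ⟨F, hF, rfl⟩, rfl⟩
    exact ⟨_, ⟨_, ⟨F, hF, rfl⟩, rfl⟩, (X.toQ_of_isHomogeneous hF).symm⟩
  · rintro ⟨_, ⟨_, ⟨F, hF, rfl⟩, rfl⟩, rfl⟩
    exact ⟨_, ⟨F, hF, rfl⟩, X.toQ_of_isHomogeneous hF⟩

lemma finrank_Rdeg (i : ℕ) : Module.finrank K (X.Rdeg i) = Module.finrank K (X.Fil i) := by
  rw [(Submodule.equivMapOfInjective X.iota.toLinearMap X.iota_injective _).finrank_eq,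
    map_iota_Rdeg, ← (Submodule.equivMapOfInjective (X.monoₗ i) (X.mono_injective i) _).finrank_eq]

lemma exists_Fil_eq_top : ∃ N : ℕ, X.Fil N = ⊤ := by
  obtain ⟨N, hN⟩ := X.exists_affineFil_eq_top
  refine ⟨N, ?_⟩
  rw [Fil_natCast, hN, Submodule.map_top]
  exact LinearMap.range_eq_top.2 X.localEquiv.surjective

lemma Fil_eq_top {i : ℤ} (hi : X.reg ≤ i) : X.Fil i = ⊤ := by
  have hreg : ∀ j, X.reg ≤ j → Module.finrank K (X.Rdeg j) = X.deg := by
    obtain ⟨N, hN⟩ := X.exists_Fil_eq_top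
    refine Nat.sInf_mem (s := {i | ∀ j, i ≤ j → Module.finrank K (X.Rdeg j) = X.deg})
      ⟨N, fun j hj => ?_⟩
    have htop : X.Fil j = ⊤ := eq_top_iff.2 (hN ▸ X.Fil_mono (by exact_mod_cast hj))
    rw [finrank_Rdeg, htop, finrank_top, deg_eq_finrank]
  lift i to ℕ using (by omega)
  refine Submodule.eq_top_of_finrank_eq ?_
  rw [← finrank_Rdeg, hreg i (by exact_mod_cast hi), deg_eq_finrank]

lemma mem_Fil_of_reg_le {i : ℤ} (hi : X.reg ≤ i) (a : X.globalSections) : a ∈ X.Fil i :=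
  X.Fil_eq_top hi ▸ Submodule.mem_top

variable {X}

lemma mem_range_iota_of_mem_Qge_reg {q : X.Q} (hq : q ∈ X.Qge X.reg) : q ∈ Set.range X.iota :=
  mem_range_iota_iff.2 fun i => by
    rcases lt_or_ge i (X.reg : ℤ) with hi | hi
    · exact mem_Qge.1 hq i hi ▸ Submodule.zero_mem _
    · exact X.mem_Fil_of_reg_le hi _

lemma map_iota_iSup_Rdeg {m : ℕ} (hm : X.reg ≤ m) :
    (⨆ (i : ℕ) (_ : m ≤ i), X.Rdeg i).map X.iota.toLinearMap = X.Qge m := by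
  simp only [Submodule.map_iSup, map_iota_Rdeg]
  refine le_antisymm (iSup₂_le fun i hi => ?_) fun q hq => ?_
  · rintro _ ⟨a, -, rfl⟩
    exact mono_mem_Qge (by exact_mod_cast hi) a
  · refine mem_of_forall_mono_coeff_mem fun i => ?_
    rcases lt_or_ge i (m : ℤ) with hi | hi
    · exact (mem_Qge.1 hq i hi ▸ X.mono_zero i).symm ▸ Submodule.zero_mem _
    · lift i to ℕ using (by omega)
      exact Submodule.mem_iSup_of_mem i <| Submodule.mem_iSup_of_mem (by exact_mod_cast hi)
        ⟨_, X.mem_Fil_of_reg_le (by omega) _, rfl⟩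

end CoordinateRing

variable {X}

/-! ### The degree zero part of a homogeneous trace map -/

section TraceForm

variable {σ : X.Q →ₗ[X.L0] X.L0} {τ : X.globalSections →ₗ[K] K}

/-- `τ` is the degree zero part of the trace map `σ`: it satisfies `σ((a_p T_pⁱ)_p) = τ(a) x₀ⁱ`,
expressed here through coefficients, and the form `(a, b) ↦ τ(ab)` is nondegenerate. -/
structure IsTraceForm (σ : X.Q →ₗ[X.L0] X.L0) (τ : X.globalSections →ₗ[K] K) : Prop where
  coeff_map : ∀ i q, coeff i (σ q : X.Q) = algebraMap K _ (τ (coeff i q))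
  nondegenerate : (mulForm τ).Nondegenerate

lemma coe_map_mul_of_mem_L0 (σ : X.Q →ₗ[X.L0] X.L0) {c : X.Q} (hc : c ∈ X.L0) (q : X.Q) :
    (σ (c * q) : X.Q) = c * σ q :=
  congrArg Subtype.val (σ.map_smul ⟨c, hc⟩ q)

/-- The `L₀`-linear form `σ` as a `K`-linear map from `Q^h(R)` to itself. -/
def traceₗ (σ : X.Q →ₗ[X.L0] X.L0) : X.Q →ₗ[K] X.Q :=
  X.L0.val.toLinearMap ∘ₗ σ.restrictScalars K

@[simp] lemma traceₗ_apply (σ : X.Q →ₗ[X.L0] X.L0) (q : X.Q) : traceₗ σ q = σ q := rfl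

lemma exists_algebraMap_eq_coeff_zero (σ : X.Q →ₗ[X.L0] X.L0) :
    ∃ τ : X.globalSections →ₗ[K] K, ∀ a, algebraMap K _ (τ a) = coeff 0 (σ (X.mono 0 a) : X.Q) := by
  obtain ⟨ρ, hρ⟩ := (Algebra.linearMap K X.globalSections).exists_leftInverse_of_injective
    (LinearMap.ker_eq_bot.2 (FaithfulSMul.algebraMap_injective K X.globalSections))
  refine ⟨ρ ∘ₗ coeff 0 ∘ₗ traceₗ σ ∘ₗ X.monoₗ 0, fun a => ?_⟩
  obtain ⟨c, hc⟩ := coeff_mem_range_algebraMap (σ (X.mono 0 a)).2 0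
  simp only [LinearMap.comp_apply, monoₗ_apply, traceₗ_apply, ← hc]
  exact congrArg _ (LinearMap.congr_fun hρ c)

lemma coeff_map_eq_of_homogeneous (hσ : ∀ i, ∀ q ∈ X.Qdeg i, (σ q : X.Q) ∈ X.Qdeg i)
    (hτ : ∀ a, algebraMap K _ (τ a) = coeff 0 (σ (X.mono 0 a) : X.Q)) (i : ℤ) (q : X.Q) :
    coeff i (σ q : X.Q) = algebraMap K _ (τ (coeff i q)) := by
  have map_mono_zero (a) : (σ (X.mono 0 a) : X.Q) = X.mono 0 (algebraMap K _ (τ a)) := by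
    obtain ⟨b, hb⟩ := hσ 0 _ ⟨a, rfl⟩
    rw [hτ, ← hb, coeff_mono_self]
  have map_mono (j a) : (σ (X.mono j a) : X.Q) = X.mono j (algebraMap K _ (τ a)) := by
    have mono_eq (b) : X.mono j b = X.mono j 1 * X.mono 0 b := by
      rw [mono_mul, add_zero, one_mul]
    rw [mono_eq, coe_map_mul_of_mem_L0 σ (X.mono_one_mem_L0 j), map_mono_zero, ← mono_eq]
  suffices coeff i ∘ₗ traceₗ σ = Algebra.linearMap K _ ∘ₗ τ ∘ₗ coeff i from
    LinearMap.congr_fun this q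
  refine linearMap_ext_mono fun j a => ?_
  simp only [LinearMap.comp_apply, traceₗ_apply, map_mono, coeff_mono, Algebra.linearMap_apply]
  split_ifs
  · rfl
  · rw [map_zero, map_zero]

lemma IsHomogeneousTraceMap.exists_isTraceForm (hσ : X.IsHomogeneousTraceMap σ) :
    ∃ τ, IsTraceForm σ τ := by
  obtain ⟨τ, hτ⟩ := exists_algebraMap_eq_coeff_zero σ
  have coeff_map := coeff_map_eq_of_homogeneous hσ.1 hτ
  refine ⟨τ, coeff_map, (mulForm_isRefl τ).nondegenerate_iff_separatingLeft.2 fun a ha => ?_⟩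
  refine X.mono_injective 0 ((hσ.2.1 ?_).trans (X.mono_zero 0).symm)
  refine LinearMap.ext fun q => Subtype.ext (ext_coeff fun i => ?_)
  change coeff i (σ (X.mono 0 a * q) : X.Q) = coeff i (σ (0 * q) : X.Q)
  have haq : τ (a * coeff (i - 0) q) = 0 := ha _
  rw [coeff_map, coeff_map, coeff_mono_mul, haq, zero_mul]
  simp only [map_zero]

end TraceForm

/-! ### The complementary module -/

lemma iota_mem_L0 {f : X.R} (hf : f ∈ X.Kx0) : X.iota f ∈ X.L0 := by
  suffices X.Kx0 ≤ X.L0.comap X.iota from this hf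
  refine Algebra.adjoin_le (Set.singleton_subset_iff.2 ?_)
  rw [SetLike.mem_coe, Subalgebra.mem_comap, ← pow_one X.x0, iota_x0_pow]
  exact X.mono_one_mem_L0 _

namespace IsTraceForm

variable {σ : X.Q →ₗ[X.L0] X.L0} {τ : X.globalSections →ₗ[K] K} {g : X.Q}

lemma exists_iota_eq (hτ : IsTraceForm σ τ) {q : X.Q} (h : ∀ i < 0, τ (coeff i q) = 0) :
    ∃ y : X.Kx0, X.iota y = σ q := by
  suffices (σ q : X.Q) ∈ X.Kx0.toSubmodule.map X.iota.toLinearMap by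
    obtain ⟨y, hy, hyq⟩ := this
    exact ⟨⟨y, hy⟩, hyq⟩
  refine mem_of_forall_mono_coeff_mem fun i => ?_
  rw [hτ.coeff_map]
  rcases lt_or_ge i 0 with hi | hi
  · rw [h i hi, map_zero, mono_zero]
    exact Submodule.zero_mem _
  · lift i to ℕ using hi
    refine ⟨τ (coeff i q) • X.x0 ^ i, X.Kx0.smul_mem
      (X.Kx0.pow_mem (Algebra.self_mem_adjoin_singleton K _) i) _, ?_⟩
    rw [map_smul, AlgHom.toLinearMap_apply, iota_x0_pow, ← monoₗ_apply, ← map_smul,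
      Algebra.algebraMap_eq_smul_one, monoₗ_apply]

lemma mem_complementaryModule_iff_trace (hτ : IsTraceForm σ τ) :
    g ∈ X.complementaryModule σ ↔ ∀ f, ∀ i < 0, τ (coeff i (g * X.iota f)) = 0 := by
  constructor
  · rintro ⟨φ, hφ⟩ f i hi
    have hφf : (σ (g * X.iota f) : X.Q) = X.iota (φ f : X.R) := hφ f
    refine (map_eq_zero_iff _ (FaithfulSMul.algebraMap_injective K X.globalSections)).1 ?_
    rw [← hτ.coeff_map, hφf, mem_Qge.1 (iota_mem_Qge_zero _) i hi]
  · intro h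
    choose y hy using fun f => hτ.exists_iota_eq (h f)
    refine ⟨⟨⟨y, fun f f' => ?_⟩, fun k f => ?_⟩, fun f => (hy f).symm⟩ <;>
      refine Subtype.ext (X.iota_injective ?_)
    · rw [hy, map_add X.iota, mul_add, map_add σ]
      simp only [AddMemClass.coe_add, map_add, hy]
    · change X.iota (y ((k : X.R) * f)) = X.iota ((k : X.R) * y f)
      rw [hy, map_mul X.iota, map_mul X.iota, hy, ← coe_map_mul_of_mem_L0 σ (iota_mem_L0 k.2),
        mul_left_comm]

lemma mem_complementaryModule_iff (hτ : IsTraceForm σ τ) :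
    g ∈ X.complementaryModule σ ↔ ∀ i, coeff i g ∈ (mulForm τ).orthogonal (X.Fil (-i - 1)) := by
  rw [hτ.mem_complementaryModule_iff_trace]
  constructor
  · intro h i a ha
    obtain ⟨f, hf⟩ := mem_Fil.1 ha
    have hag := h f (-1) (by omega)
    rwa [hf, mul_comm, coeff_mono_mul, show (-1 : ℤ) - (-i - 1) = i by omega] at hag
  · intro h f i hi
    suffices X.iota f ∈ LinearMap.ker (τ ∘ₗ coeff i ∘ₗ LinearMap.mulLeft K g) from this
    refine mem_of_forall_mono_coeff_mem fun j => ?_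
    have hf : coeff j (X.iota f) ∈ X.Fil (-(i - j) - 1) :=
      X.Fil_mono (by omega) (coeff_iota_mem j f)
    rw [LinearMap.mem_ker, LinearMap.comp_apply, LinearMap.comp_apply, LinearMap.mulLeft_apply,
      mul_comm, coeff_mono_mul]
    exact h (i - j) _ hf

lemma one_mem_complementaryModule (hτ : IsTraceForm σ τ) : 1 ∈ X.complementaryModule σ := by
  refine hτ.mem_complementaryModule_iff_trace.2 fun f i hi => ?_
  rw [one_mul, mem_Qge.1 (iota_mem_Qge_zero f) i hi, map_zero]

lemma mono_mem_complementaryModule (hτ : IsTraceForm σ τ) {a : X.globalSections}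
    (ha : a ∈ (mulForm τ).orthogonal (X.Fil (X.reg - 1))) :
    X.mono (-X.reg) a ∈ X.complementaryModule σ := by
  refine hτ.mem_complementaryModule_iff.2 fun i => ?_
  rw [coeff_mono]
  split_ifs with hi
  · rwa [← hi, neg_neg]
  · exact Submodule.zero_mem _

lemma coeff_neg_reg_mem_orthogonal (hτ : IsTraceForm σ τ) (hg : g ∈ X.complementaryModule σ) :
    coeff (-X.reg) g ∈ (mulForm τ).orthogonal (X.Fil (X.reg - 1)) := by
  simpa only [neg_neg] using hτ.mem_complementaryModule_iff.1 hg (-X.reg)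

lemma mem_Qge_of_mem_complementaryModule (hτ : IsTraceForm σ τ)
    (hg : g ∈ X.complementaryModule σ) : g ∈ X.Qge (-X.reg) := by
  refine mem_Qge.2 fun i hi => ?_
  have hgi := hτ.mem_complementaryModule_iff.1 hg i
  rw [X.Fil_eq_top (by omega)] at hgi
  exact hτ.nondegenerate.2 _ fun a => hgi a Submodule.mem_top

end IsTraceForm

/-! ### The Cayley–Bacharach property -/

section CayleyBacharach

variable {p : X.Supp}

instance : Module.Finite K (X.residueField p) :=
  Module.Finite.of_surjective (IsScalarTower.toAlgHom K (X.localRing p) _).toLinearMap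
    IsLocalRing.residue_surjective

lemma exists_isResidueBasis (p : X.Supp) : ∃ e, X.IsResidueBasis p e := by
  let b := Module.finBasis K (X.residueField p)
  choose e he using fun k => IsLocalRing.residue_surjective (b k)
  exact ⟨e, b, he⟩

lemma isMaximalSubscheme_of_map_eq {s : X.localRing p} (hs : IsSocleElement s)
    {𝔟 : Ideal X.affineRing} (hp : 𝔟.map (algebraMap X.affineRing (X.localRing p)) = Ideal.span {s})
    (hq : ∀ q, q ≠ p → 𝔟.map (algebraMap X.affineRing (X.localRing q)) = ⊥) :
    X.IsMaximalSubscheme p 𝔟 := by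
  classical
  refine ⟨hq, ?_⟩
  have := Fintype.ofFinite X.Supp
  rw [subDeg, deg, finsum_eq_sum_of_fintype, finsum_eq_sum_of_fintype,
    ← Finset.add_sum_erase _ _ (Finset.mem_univ p), ← Finset.add_sum_erase _ _ (Finset.mem_univ p),
    ← hs.finrank_quotient_add_finrank_residueField (K := K), add_right_comm]
  congr 1
  · exact congrArg (· + _) (Ideal.quotientEquivAlgOfEq K hp).toLinearEquiv.finrank_eq
  · refine Finset.sum_congr rfl fun q hqp => ?_
    exact ((Ideal.quotientEquivAlgOfEq K (hq q (Finset.ne_of_mem_erase hqp))).trans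
      (AlgEquiv.quotientBot K (X.localRing q))).toLinearEquiv.finrank_eq

lemma exists_isMaximalSubscheme {s : X.localRing p} (hs : IsSocleElement s) :
    ∃ 𝔟, X.IsMaximalSubscheme p 𝔟 ∧ X.IsSocleElementOf p 𝔟 s := by
  classical
  let 𝔟 : Ideal X.affineRing := Ideal.span {X.localEquiv.symm (Pi.single p s)}
  have hmap (q) : 𝔟.map (algebraMap X.affineRing (X.localRing q)) =
      Ideal.span {(Pi.single p s : X.globalSections) q} := by
    rw [Ideal.map_span, Set.image_singleton, ← localEquiv_apply, AlgEquiv.apply_symm_apply]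
  have hp : 𝔟.map (algebraMap X.affineRing (X.localRing p)) = Ideal.span {s} := by
    rw [hmap, Pi.single_eq_same]
  refine ⟨𝔟, isMaximalSubscheme_of_map_eq hs hp fun q hq => ?_, hs.1, hs.2, hp⟩
  rw [hmap, Pi.single_eq_of_ne hq, Ideal.span_singleton_eq_bot]

open Classical in
lemma mu_le_iff {a : X.localRing p} {i : ℕ} : X.mu p a ≤ i ↔ Pi.single p a ∈ X.Fil i := by
  refine ⟨fun h => X.Fil_mono (Int.ofNat_le.2 h) ?_, fun h => Nat.sInf_le h⟩
  exact Nat.sInf_mem (s := {i : ℕ | X.mono i (Pi.single p a) ∈ Set.range X.iota})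
    ⟨X.reg, X.mem_Fil_of_reg_le le_rfl _⟩

lemma exists_isMaxSeparatorDegree_pointDeg (p : X.Supp) :
    ∃ 𝔟, X.IsMaximalSubscheme p 𝔟 ∧ X.IsMaxSeparatorDegree p 𝔟 (X.pointDeg p) := by
  obtain ⟨c, hc⟩ := exists_isSocleElement_mul (one_ne_zero (α := X.localRing p))
  obtain ⟨𝔟, h𝔟, hs⟩ := exists_isMaximalSubscheme hc
  obtain ⟨e, he⟩ := exists_isResidueBasis p
  exact Nat.sInf_mem
    (s := {m : ℕ | ∃ 𝔟, X.IsMaximalSubscheme p 𝔟 ∧ X.IsMaxSeparatorDegree p 𝔟 m})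
    ⟨_, 𝔟, h𝔟, _, hs, e, he, rfl⟩

open Classical in
lemma pointDeg_le_iff {m : ℕ} : X.pointDeg p ≤ m ↔
    ∃ s : X.localRing p, (∀ y, Pi.single p (y * s) ∈ X.Fil m) ∧ IsSocleElement s := by
  constructor
  · intro hm
    obtain ⟨𝔟, -, s, ⟨hs0, hsm, -⟩, e, ⟨b, hb⟩, hmax⟩ := exists_isMaxSeparatorDegree_pointDeg p
    have hs : IsSocleElement s := ⟨hs0, hsm⟩
    refine ⟨s, fun y => ?_, hs⟩
    have hy := hs.mul_mem_span_range (K := K) (e := e) (by simpa only [hb] using b.span_eq.ge) y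
    suffices Submodule.span K (Set.range fun k => e k * s) ≤
        (X.Fil m).comap (LinearMap.single K X.localRing p) from this hy
    refine Submodule.span_le.2 ?_
    rintro _ ⟨k, rfl⟩
    rw [hmax] at hm
    exact mu_le_iff.1 (Finset.sup_le_iff.1 hm k (Finset.mem_univ k))
  · rintro ⟨s, hsm, hs⟩
    obtain ⟨𝔟, h𝔟, hs𝔟⟩ := exists_isMaximalSubscheme hs
    obtain ⟨e, he⟩ := exists_isResidueBasis p
    have hle : X.pointDeg p ≤ Finset.univ.sup fun k => X.mu p (e k * s) :=
      Nat.sInf_le ⟨𝔟, h𝔟, s, hs𝔟, e, he, rfl⟩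
    exact hle.trans (Finset.sup_le fun k _ => mu_le_iff.2 (hsm _))

open Classical in
lemma pointDeg_lt_iff {m : ℕ} : X.pointDeg p < m ↔
    ∃ s : X.localRing p, (∀ y, Pi.single p (y * s) ∈ X.Fil (m - 1)) ∧ IsSocleElement s := by
  cases m with
  | zero =>
    refine iff_of_false (Nat.not_lt_zero _) ?_
    rintro ⟨s, hsm, hs⟩
    have hs1 := hsm 1
    rw [X.Fil_of_neg (by simp), Submodule.mem_bot, one_mul, Pi.single_eq_zero_iff] at hs1
    exact hs.1 hs1
  | succ m =>
    simpa only [Nat.cast_succ, add_sub_cancel_right, Nat.lt_succ_iff] using pointDeg_le_iff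

lemma cayleyBacharach_iff : X.CayleyBacharach ↔ ContainsNoIdeal (X.Fil (X.reg - 1)) := by
  classical
  rw [containsNoIdeal_iff_forall_not_isSocleElement]
  refine forall_congr' fun p => ?_
  rw [← not_lt, pointDeg_lt_iff, not_exists]
  exact forall_congr' fun s => not_and

end CayleyBacharach

/-! ### The conductor -/

lemma Qge_reg_subset_conductor : (X.Qge X.reg : Set X.Q) ⊆ X.conductor := by
  refine fun q hq => ⟨mem_Rtilde_iff.2 (mem_Qge.2 fun i hi => mem_Qge.1 hq i (by omega)), ?_⟩
  intro g hg
  have hqg := mul_mem_Qge hq (mem_Rtilde_iff.1 hg)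
  rw [add_zero] at hqg
  exact mem_range_iota_of_mem_Qge_reg hqg

lemma CayleyBacharach.conductor_eq (hCB : X.CayleyBacharach) :
    X.conductor = (X.Qge X.reg : Set X.Q) := by
  refine Set.Subset.antisymm (fun q hq => mem_Qge.2 fun i hi => ?_) Qge_reg_subset_conductor
  refine cayleyBacharach_iff.1 hCB _ fun b => X.Fil_mono (show i ≤ X.reg - 1 by omega) ?_
  have hbq := mem_range_iota_iff.1 (hq.2 _ (mem_Rtilde_iff.2 (mono_mem_Qge le_rfl b))) i
  rwa [mul_comm, coeff_mono_mul, sub_zero] at hbq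

/-! ### The different and the trace of the complementary module -/

section Different

variable {σ : X.Q →ₗ[X.L0] X.L0} {τ : X.globalSections →ₗ[K] K}

lemma different_eq_one_div :
    X.different σ = ((1 / X.complementaryModule σ : Submodule X.R X.Q) : Set X.Q) :=
  Set.ext fun _ => (forall₂_congr fun _ _ => Submodule.mem_one.symm).trans
    Submodule.mem_div_iff_forall_mul_mem.symm

variable (X) in
lemma isUnit_mono_one (i : ℤ) : IsUnit (X.mono i 1) :=
  IsUnit.of_mul_eq_one (X.mono (-i) 1) (by rw [mono_mul, add_neg_cancel, mul_one, mono_one])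

namespace IsTraceForm

lemma mul_mem_Qge_reg (hτ : IsTraceForm σ τ) {f g : X.Q} (hf : f ∈ X.Qge (2 * X.reg))
    (hg : g ∈ X.complementaryModule σ) : f * g ∈ X.Qge X.reg := by
  have hfg := mul_mem_Qge hf (hτ.mem_Qge_of_mem_complementaryModule hg)
  rwa [two_mul, add_neg_cancel_right] at hfg

lemma Qge_subset_different (hτ : IsTraceForm σ τ) :
    (X.Qge (2 * X.reg) : Set X.Q) ⊆ X.different σ :=
  fun _ hf _ hg => mem_range_iota_of_mem_Qge_reg (hτ.mul_mem_Qge_reg hf hg)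

lemma iota_image_traceIdeal (hτ : IsTraceForm σ τ) : X.iota '' (X.traceIdeal σ : Set X.R) =
    ((1 / X.complementaryModule σ * X.complementaryModule σ : Submodule X.R X.Q) : Set X.Q) := by
  rw [← map_iSup_range_eq_one_div_mul hτ.one_mem_complementaryModule fun c hc => ?_]
  · rfl
  · have hx : algebraMap X.R X.Q (X.x0 ^ (2 * X.reg)) = X.mono ((2 * X.reg : ℕ) : ℤ) 1 :=
      X.iota_x0_pow _
    refine ⟨X.x0 ^ (2 * X.reg), hx ▸ (X.isUnit_mono_one _).mem_nonZeroDivisors, ?_⟩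
    rw [Algebra.smul_def, hx]
    exact Submodule.mem_one.2 <| mem_range_iota_of_mem_Qge_reg <|
      hτ.mul_mem_Qge_reg (mono_mem_Qge (by push_cast; rfl) 1) hc

lemma mul_mem_iota_image_traceIdeal (hτ : IsTraceForm σ τ) {f g : X.Q} (hf : f ∈ X.different σ)
    (hg : g ∈ X.complementaryModule σ) : f * g ∈ X.iota '' (X.traceIdeal σ : Set X.R) := by
  rw [different_eq_one_div] at hf
  rw [hτ.iota_image_traceIdeal]
  exact Submodule.mul_mem_mul hf hg

lemma Qge_reg_subset_traceIdeal (hτ : IsTraceForm σ τ) (hCB : X.CayleyBacharach) :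
    (X.Qge X.reg : Set X.Q) ⊆ X.iota '' (X.traceIdeal σ : Set X.R) := by
  have hspan := (cayleyBacharach_iff.1 hCB).span_orthogonal_eq_top hτ.nondegenerate
  intro q hq
  suffices q ∈ ((X.traceIdeal σ).restrictScalars K).map X.iota.toLinearMap from this
  refine mem_of_forall_mono_coeff_mem fun i => ?_
  rcases lt_or_ge i (X.reg : ℤ) with hi | hi
  · rw [mem_Qge.1 hq i hi, mono_zero]
    exact Submodule.zero_mem _
  · obtain ⟨m, c, g, hcg⟩ := Submodule.mem_span_set'.1 (hspan ▸ Submodule.mem_top (x := coeff i q))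
    rw [← hcg, ← monoₗ_apply, map_sum]
    refine Submodule.sum_mem _ fun k _ => ?_
    have hmul : X.mono i (c k * g k) = X.mono (i + X.reg) (c k) * X.mono (-X.reg) (g k) := by
      rw [mono_mul, add_neg_cancel_right]
    rw [monoₗ_apply, smul_eq_mul, hmul]
    exact hτ.mul_mem_iota_image_traceIdeal
      (hτ.Qge_subset_different (mono_mem_Qge (by omega) _))
      (hτ.mono_mem_complementaryModule (g k).2)

lemma traceIdeal_subset_Qge_reg (hτ : IsTraceForm σ τ)
    (hδ : X.different σ ⊆ X.Qge (2 * X.reg)) :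
    X.iota '' (X.traceIdeal σ : Set X.R) ⊆ X.Qge X.reg := by
  rw [hτ.iota_image_traceIdeal]
  rw [different_eq_one_div] at hδ
  intro q hq
  exact Submodule.mul_induction_on hq (fun f hf g hg => hτ.mul_mem_Qge_reg (hδ hf) hg)
    fun _ _ => Submodule.add_mem _

lemma minimalDedekindDifferent_iff (hτ : IsTraceForm σ τ) :
    X.MinimalDedekindDifferent σ ↔ X.different σ ⊆ X.Qge (2 * X.reg) := by
  have himage : X.iota '' ((⨆ (i : ℕ) (_ : 2 * X.reg ≤ i), X.Rdeg i : Submodule K X.R) : Set X.R) =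
      X.Qge (2 * X.reg) :=
    congrArg SetLike.coe (map_iota_iSup_Rdeg (X := X) (m := 2 * X.reg) (by omega))
  rw [MinimalDedekindDifferent, himage]
  exact ⟨fun h => h.subset, fun h => h.antisymm hτ.Qge_subset_different⟩

lemma different_subset_Qge (hτ : IsTraceForm σ τ) (hCB : X.CayleyBacharach)
    (htr : X.iota '' (X.traceIdeal σ : Set X.R) ⊆ X.Qge X.reg) :
    X.different σ ⊆ X.Qge (2 * X.reg) := by
  refine fun f hf => mem_Qge.2 fun i hi => cayleyBacharach_iff.1 hCB _ ?_
  refine forall_mul_mem_of_forall_mul_eq_zero hτ.nondegenerate fun g hg => ?_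
  have hfg := htr (hτ.mul_mem_iota_image_traceIdeal hf (hτ.mono_mem_complementaryModule hg))
  have hcoeff := mem_Qge.1 hfg (i - X.reg) (by omega)
  rwa [mul_comm, coeff_mono_mul, sub_neg_eq_add, sub_add_cancel] at hcoeff

lemma mono_mem_different (hτ : IsTraceForm σ τ) {a : X.globalSections}
    (ha : ∀ b, b * a ∈ X.Fil (X.reg - 1)) : X.mono (2 * X.reg - 1) a ∈ X.different σ := by
  refine fun g hg => mem_range_iota_of_mem_Qge_reg (mem_Qge.2 fun i hi => ?_)
  rw [coeff_mono_mul]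
  rcases lt_or_ge (i - (2 * X.reg - 1)) (-X.reg : ℤ) with hlt | hge
  · rw [mem_Qge.1 (hτ.mem_Qge_of_mem_complementaryModule hg) _ hlt, mul_zero]
  · rw [show i - (2 * X.reg - 1) = (-X.reg : ℤ) by omega, mul_comm]
    exact mul_eq_zero_of_forall_mul_mem hτ.nondegenerate (hτ.coeff_neg_reg_mem_orthogonal hg) ha

lemma cayleyBacharach_of_different_subset (hτ : IsTraceForm σ τ)
    (hδ : X.different σ ⊆ X.Qge (2 * X.reg)) : X.CayleyBacharach := by
  refine cayleyBacharach_iff.2 fun a ha => ?_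
  rw [← X.coeff_mono_self (2 * X.reg - 1) a]
  exact mem_Qge.1 (hδ (hτ.mono_mem_different ha)) _ (by omega)

end IsTraceForm

end Different

end ZeroDimScheme

end

theorem dedekind_CB_stmt14 {K : Type u} [Field K] {n : ℕ} (X : ZeroDimScheme K n)
    (hX : X.LocallyGorenstein) (σ : X.Q →ₗ[X.L0] X.L0) (hσ : X.IsHomogeneousTraceMap σ) :
    (X.CayleyBacharach → X.conductor ⊆ X.iota '' (X.traceIdeal σ : Set X.R)) ∧
    ((X.CayleyBacharach ∧ X.conductor = X.iota '' (X.traceIdeal σ : Set X.R)) ↔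
      X.MinimalDedekindDifferent σ) := by
  obtain ⟨τ, hτ⟩ := hσ.exists_isTraceForm
  have conductor_subset (hCB : X.CayleyBacharach) :
      X.conductor ⊆ X.iota '' (X.traceIdeal σ : Set X.R) :=
    hCB.conductor_eq ▸ hτ.Qge_reg_subset_traceIdeal hCB
  refine ⟨conductor_subset, ?_⟩
  rw [hτ.minimalDedekindDifferent_iff]
  constructor
  · rintro ⟨hCB, heq⟩
    exact hτ.different_subset_Qge hCB (heq ▸ hCB.conductor_eq.subset)
  · intro hδ
    have hCB := hτ.cayleyBacharach_of_different_subset hδ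
    exact ⟨hCB, (conductor_subset hCB).antisymm
      ((hτ.traceIdeal_subset_Qge_reg hδ).trans ZeroDimScheme.Qge_reg_subset_conductor)⟩
end
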